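/- For every N ≥ 1 and every n ∈ ℕ, the following are equivalent: (1) there exists an ℝ-linear map f : ℝⁿ → M(N,ℂ) such that f(v) is Hermitian and f(v)² = ‖v‖² I_N for all v ∈ ℝⁿ; (2) there exists an ℝ-linear map f : ℝⁿ → M(N,ℂ) such that every f(v) is Hermitian and f(v) is invertible for every nonzero v; (3) n ≤ 2·ord₂(N) + 1. (Entry 𝔤 = 𝔤𝔩(N,ℂ) of the Hurwitz–Radon value theorem.) -/

import Mathlib

open Matrix

/-!
Upper bound. Suppose `2k` Hermitian matrices of size `N` span a real space all of whose nonzero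
elements are invertible, and use them as the momentum and position coefficients of a trigonometric
polynomial `D` on the torus of dimension `2k` which vanishes exactly at the `4 ^ k` points `θ` with
`2θ = 0`. Weyl quantization replaces the exponentials by clock and shift matrices of size `M ^ k`.
A Hermitian mass `G` added to `D` through the parity operator of the lattice gaps the
quantized operator for all large `M` as soon as `G` is invertible where `D` vanishes, so the number
of its positive eigenvalues depends only on the homotopy class of `G` among such masses. One
homotopy joins a mass for which the kinetic term `D` can be switched off, so that this number can
be computed, to a mass acting on a smaller auxiliary space, which forces divisibility by `4 ^ k`.
Comparing the two gives `2 ^ k ∣ N`.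

Lower bound. Tensor products of Pauli matrices give `2b + 1` anticommuting Hermitian involutions of
size `2 ^ b`.
-/

namespace HurwitzRadon

open Filter MeasureTheory Topology UnitAddTorus

noncomputable section

/-! ### Trigonometric polynomials -/

/-- Trigonometric polynomials `∑ₘ cₘ e^{2πi m·θ}` on the torus `(ℝ/ℤ)^ι` with coefficients in `R`,
stored through their coefficients; they play the role of symbols to be quantized. -/
abbrev TrigPoly (ι R : Type*) [Semiring R] := AddMonoidAlgebra R (ι → ℤ)

namespace TrigPoly

open AddMonoidAlgebra

section Eval

variable {ι R : Type*} [Fintype ι] [Ring R] [Algebra ℂ R]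

/-- Evaluation of a trigonometric polynomial at a point of the torus. -/
def eval (z : UnitAddTorus ι) : TrigPoly ι R →ₐ[ℂ] R :=
  liftNCAlgHom (AlgHom.id ℂ R)
    { toFun := fun m ↦ algebraMap ℂ R (mFourier m.toAdd z)
      map_one' := by simp [mFourier_zero]
      map_mul' := fun m m' ↦ by simp [mFourier_add] }
    fun c _ ↦ (Algebra.commutes _ c).symm

lemma eval_single (z : UnitAddTorus ι) (m : ι → ℤ) (c : R) :
    eval z (single m c) = mFourier m z • c := by
  rw [Algebra.smul_def, Algebra.commutes]
  exact liftNC_single _ _ m c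

lemma eval_eq_sum (z : UnitAddTorus ι) (a : TrigPoly ι R) :
    eval z a = ∑ m ∈ a.coeff.support, mFourier m z • a.coeff m := by
  conv_lhs => rw [← AddMonoidAlgebra.sum_coeff_single a]
  simp [Finsupp.sum, eval_single]

lemma eval_lineMap (z : UnitAddTorus ι) (a b : TrigPoly ι R) (t : ℝ) :
    eval z (AffineMap.lineMap a b t) = AffineMap.lineMap (eval z a) (eval z b) t := by
  simp only [AffineMap.lineMap_apply_module, map_add, AlgHom.map_smul_of_tower]

end Eval

section FourierCoefficients

-- `mFourierCoeff` is defined with these measure instances, which Mathlib keeps local.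
local instance instMeasureSpaceUnitAddCircle : MeasureSpace UnitAddCircle :=
  ⟨AddCircle.haarAddCircle⟩

local instance instIsAddHaarMeasureUnitAddCircle :
    Measure.IsAddHaarMeasure (volume : Measure UnitAddCircle) :=
  inferInstanceAs (Measure.IsAddHaarMeasure AddCircle.haarAddCircle)

local instance instIsProbabilityMeasureUnitAddCircle :
    IsProbabilityMeasure (volume : Measure UnitAddCircle) :=
  inferInstanceAs (IsProbabilityMeasure AddCircle.haarAddCircle)

variable {ι R : Type*} [Fintype ι] [NormedRing R] [NormedAlgebra ℂ R]

lemma integral_mFourier (m : ι → ℤ) :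
    ∫ z : UnitAddTorus ι, mFourier m z = if m = 0 then 1 else 0 := by
  have h := orthonormal_iff_ite.mp (orthonormal_mFourier (d := ι)) 0 m
  simp only [ContinuousMap.inner_toLp, ← mFourier_neg, ← mFourier_add, neg_zero, add_zero] at h
  exact h.trans (by simp [eq_comm])

lemma continuous_eval (a : TrigPoly ι R) : Continuous fun z ↦ eval z a := by
  simp only [eval_eq_sum]
  fun_prop

lemma mFourierCoeff_eval [CompleteSpace R] (a : TrigPoly ι R) (m : ι → ℤ) :
    mFourierCoeff (fun z ↦ eval z a) m = a.coeff m := by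
  classical
  have integrand (z : UnitAddTorus ι) : mFourier (-m) z • eval z a
      = ∑ i ∈ a.coeff.support, mFourier (-m + i) z • a.coeff i := by
    simp only [eval_eq_sum, Finset.smul_sum, smul_smul, mFourier_add]
  have integrable (i : ι → ℤ) :
      Integrable fun z : UnitAddTorus ι ↦ mFourier (-m + i) z • a.coeff i :=
    Continuous.integrable_of_hasCompactSupport (by fun_prop) (.of_compactSpace _)
  calc mFourierCoeff (fun z ↦ eval z a) m
      = ∑ i ∈ a.coeff.support, (∫ z : UnitAddTorus ι, mFourier (-m + i) z) • a.coeff i := by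
        simp only [← integral_smul_const]
        rw [← integral_finsetSum _ fun i _ ↦ integrable i]
        exact integral_congr_ae (.of_forall integrand)
    _ = a.coeff m := by
        simp +contextual [integral_mFourier, neg_add_eq_zero, eq_comm]

lemma norm_coeff_le [CompleteSpace R] {a : TrigPoly ι R} {C : ℝ} (h : ∀ z, ‖eval z a‖ ≤ C)
    (m : ι → ℤ) : ‖a.coeff m‖ ≤ C := by
  rw [← mFourierCoeff_eval a m]
  refine (norm_integral_le_of_norm_le_const (C := C) (.of_forall fun z ↦ ?_)).trans (by simp)
  have norm_le_one : ‖mFourier (-m) z‖ ≤ 1 :=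
    ((mFourier (-m)).norm_coe_le_norm z).trans mFourier_norm.le
  calc ‖mFourier (-m) z • eval z a‖
      ≤ 1 * ‖eval z a‖ := by rw [norm_smul]; gcongr
    _ ≤ C := by rw [one_mul]; exact h z

end FourierCoefficients

section SumNorm

variable {ι R : Type*} [NormedRing R]

/-- The sum of the norms of the coefficients, which bounds every quantization. -/
def sumNorm (a : TrigPoly ι R) : ℝ := a.coeff.sum fun _ c ↦ ‖c‖

lemma sumNorm_nonneg (a : TrigPoly ι R) : 0 ≤ sumNorm a :=
  Finset.sum_nonneg fun _ _ ↦ norm_nonneg _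

lemma sumNorm_le_card_mul {a : TrigPoly ι R} {s : Finset (ι → ℤ)} {C : ℝ}
    (hs : a.coeff.support ⊆ s) (hC : ∀ m, ‖a.coeff m‖ ≤ C) : sumNorm a ≤ s.card * C := by
  calc sumNorm a
      ≤ a.coeff.support.card • C := Finset.sum_le_card_nsmul _ _ _ fun m _ ↦ hC m
    _ ≤ s.card * C := by
        rw [nsmul_eq_mul]
        have : 0 ≤ C := (norm_nonneg _).trans (hC 0)
        gcongr

variable [Fintype ι]

lemma exists_support_subset_Icc [DecidableEq ι] (a : TrigPoly ι R) :
    ∃ L : ℕ, a.coeff.support ⊆ Finset.Icc (-(L : ι → ℤ)) L := by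
  refine ⟨∑ m ∈ a.coeff.support, ∑ i, (m i).natAbs, fun m hm ↦ ?_⟩
  have le_sum (i : ι) : (m i).natAbs ≤ ∑ m ∈ a.coeff.support, ∑ i, (m i).natAbs :=
    (Finset.single_le_sum (f := fun i ↦ (m i).natAbs) (by simp) (Finset.mem_univ i)).trans
      (Finset.single_le_sum (f := fun m : ι → ℤ ↦ ∑ i, (m i).natAbs) (by simp) hm)
  rw [Finset.mem_Icc, Pi.le_def, Pi.le_def]
  constructor <;> intro i <;> have := le_sum i <;>
    simp only [Pi.neg_apply, Pi.natCast_apply] <;> omega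

lemma support_pow_subset_Icc [DecidableEq ι] {a : TrigPoly ι R} {L : ℕ}
    (h : a.coeff.support ⊆ Finset.Icc (-(L : ι → ℤ)) L) (n : ℕ) :
    (a ^ n).coeff.support ⊆ Finset.Icc (-((n * L : ℕ) : ι → ℤ)) (n * L : ℕ) := by
  induction n with
  | zero =>
    rw [pow_zero]
    exact support_coeff_one_subset.trans (by simp [Finset.singleton_zero.symm])
  | succ n ih =>
    rw [pow_succ]
    refine (support_coeff_mul_subset _ _).trans (Finset.add_subset_iff.mpr fun x hx y hy ↦ ?_)
    have hx := Finset.mem_Icc.mp (ih hx)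
    have hy := Finset.mem_Icc.mp (h hy)
    rw [Finset.mem_Icc, Nat.succ_mul, Nat.cast_add, neg_add]
    exact ⟨add_le_add hx.1 hy.1, add_le_add hx.2 hy.2⟩

lemma card_Icc_neg_natCast [DecidableEq ι] (L : ℕ) :
    (Finset.Icc (-(L : ι → ℤ)) L).card = (2 * L + 1) ^ Fintype.card ι := by
  have card_coordinate : ((L : ℤ) + 1 + L).toNat = 2 * L + 1 := by omega
  simp [Pi.card_Icc, card_coordinate]

lemma tendsto_sumNorm_pow_div_pow [NormedAlgebra ℂ R] [CompleteSpace R] {a : TrigPoly ι R}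
    {ρ σ : ℝ} (hρσ : ρ < σ) (h : ∀ z, ‖eval z a‖ ≤ ρ) :
    Tendsto (fun n ↦ sumNorm (a ^ n) / σ ^ n) atTop (𝓝 0) := by
  classical
  obtain ⟨L, hL⟩ := exists_support_subset_Icc a
  have hρ : 0 ≤ ρ := (norm_nonneg _).trans (h 0)
  have hσ : 0 < σ := hρ.trans_lt hρσ
  set d := Fintype.card ι
  have bound {n : ℕ} (hn : 1 ≤ n) :
      sumNorm (a ^ n) / σ ^ n ≤ (2 * L + 1) ^ d * (n ^ d * (ρ / σ) ^ n) := by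
    rw [div_pow, ← mul_div_assoc, ← mul_div_assoc]
    gcongr
    have norm_eval_le (z : UnitAddTorus ι) : ‖eval z (a ^ n)‖ ≤ ρ ^ n := by
      rw [map_pow]
      exact (norm_pow_le' _ hn).trans (pow_le_pow_left₀ (norm_nonneg _) (h z) n)
    calc sumNorm (a ^ n)
        ≤ ((2 * (n * L) + 1) ^ d : ℕ) * ρ ^ n := by
          rw [← card_Icc_neg_natCast]
          exact sumNorm_le_card_mul (support_pow_subset_Icc hL n) (norm_coeff_le norm_eval_le)
      _ ≤ ((n * (2 * L + 1)) ^ d : ℕ) * ρ ^ n := by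
          gcongr
          linarith
      _ = (2 * L + 1) ^ d * (n ^ d * ρ ^ n) := by
          rw [mul_pow]
          push_cast
          ring
  have limit : Tendsto (fun n : ℕ ↦ (2 * L + 1 : ℝ) ^ d * (n ^ d * (ρ / σ) ^ n)) atTop (𝓝 0) := by
    simpa using (tendsto_pow_const_mul_const_pow_of_abs_lt_one d
      (by rwa [abs_of_nonneg (by positivity), div_lt_one hσ])).const_mul ((2 * L + 1 : ℝ) ^ d)
  exact squeeze_zero' (.of_forall fun _ ↦ div_nonneg (sumNorm_nonneg _) (by positivity))
    (eventually_atTop.mpr ⟨1, fun _ hn ↦ bound hn⟩) limit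

end SumNorm

section Reflect

variable {ι R : Type*} [Ring R] [Algebra ℂ R]

/-- The trigonometric polynomial `θ ↦ a(-θ)`. -/
def reflect : TrigPoly ι R →ₐ[ℂ] TrigPoly ι R :=
  mapDomainAlgHom ℂ R (-AddMonoidHom.id (ι → ℤ))

lemma reflect_single (m : ι → ℤ) (c : R) : reflect (single m c) = single (-m) c := by
  simp [reflect, mapDomain_single]

end Reflect

section MapCoeff

variable {ι R S : Type*} [Ring R] [Algebra ℂ R] [Star R] [Ring S] [Algebra ℂ S] [Star S]

/-- The action of a homomorphism on the coefficients of a trigonometric polynomial. -/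
def mapCoeff (φ : R →⋆ₐ[ℂ] S) : TrigPoly ι R →ₐ[ℂ] TrigPoly ι S :=
  mapAlgHom (ι → ℤ) φ.toAlgHom

lemma coeff_mapCoeff (φ : R →⋆ₐ[ℂ] S) (a : TrigPoly ι R) (m : ι → ℤ) :
    (mapCoeff φ a).coeff m = φ (a.coeff m) :=
  coeff_mapAlgHom _ a m

lemma mapCoeff_single (φ : R →⋆ₐ[ℂ] S) (m : ι → ℤ) (c : R) :
    mapCoeff φ (single m c) = single m (φ c) :=
  mapAlgHom_single _ m c

lemma reflect_mapCoeff (φ : R →⋆ₐ[ℂ] S) (a : TrigPoly ι R) :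
    reflect (mapCoeff φ a) = mapCoeff φ (reflect a) := by
  induction a using AddMonoidAlgebra.induction_linear with
  | zero => simp
  | add a b ha hb => simp only [map_add, ha, hb]
  | single m c => simp only [mapCoeff_single, reflect_single]

lemma eval_mapCoeff [Fintype ι] (φ : R →⋆ₐ[ℂ] S) (z : UnitAddTorus ι) (a : TrigPoly ι R) :
    eval z (mapCoeff φ a) = φ (eval z a) := by
  induction a using AddMonoidAlgebra.induction_linear with
  | zero => simp
  | add a b ha hb => simp only [map_add, ha, hb]
  | single m c => simp only [mapCoeff_single, eval_single, map_smul]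

lemma mapCoeff_lineMap (φ : R →⋆ₐ[ℂ] S) (a b : TrigPoly ι R) (t : ℝ) :
    mapCoeff φ (AffineMap.lineMap a b t) = AffineMap.lineMap (mapCoeff φ a) (mapCoeff φ b) t := by
  simp only [AffineMap.lineMap_apply_module, map_add, AlgHom.map_smul_of_tower]

end MapCoeff

end TrigPoly

/-! ### Weyl matrices -/

/-- The additive character `c ↦ e^{πic/M}` of `ℤ`. -/
def phase (M : ℕ) : AddChar ℤ ℂ where
  toFun c := Complex.exp (Real.pi * Complex.I * c / M)
  map_zero_eq_one' := by simp
  map_add_eq_mul' c d := by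
    rw [← Complex.exp_add]
    push_cast
    ring_nf

lemma phase_two_mul (M : ℕ) [NeZero M] (c : ℤ) :
    phase M (2 * c) = ZMod.stdAddChar (c : ZMod M) := by
  rw [ZMod.stdAddChar_coe]
  simp only [phase, AddChar.coe_mk]
  push_cast
  ring_nf

lemma star_phase (M : ℕ) (c : ℤ) : star (phase M c) = phase M (-c) := by
  simp [phase, ← Complex.exp_conj]

lemma tendsto_phase (c : ℤ) : Tendsto (fun M : ℕ ↦ phase M c) atTop (𝓝 1) := by
  have exponent : Tendsto (fun M : ℕ ↦ (Real.pi * Complex.I * c / M : ℂ)) atTop (𝓝 0) :=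
    tendsto_const_div_atTop_nhds_zero_nat _
  simpa [phase] using exponent.cexp

section Weyl

variable {κ : Type*} (M : ℕ)

/-- The displacement of the discrete torus `(ℤ/M)^κ` by the position part of `m`. -/
def shift (m : κ ⊕ κ → ℤ) : κ → ZMod M := fun j ↦ m (.inl j)

lemma shift_add (m m' : κ ⊕ κ → ℤ) : shift M (m + m') = shift M m + shift M m' := by
  ext
  simp [shift]

lemma shift_neg (m : κ ⊕ κ → ℤ) : shift M (-m) = -shift M m := by
  ext
  simp [shift]

lemma shift_zero : shift M (0 : κ ⊕ κ → ℤ) = 0 := by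
  ext
  simp [shift]

variable [Fintype κ]

/-- The pairing of the position part of `m` with the momentum part of `m'`. -/
def crossDot (m m' : κ ⊕ κ → ℤ) : ℤ := (m ∘ Sum.inl) ⬝ᵥ (m' ∘ Sum.inr)

lemma crossDot_add_self (m m' : κ ⊕ κ → ℤ) : crossDot (m + m') (m + m') =
    crossDot m m + crossDot m m' + (crossDot m' m + crossDot m' m') := by
  simp only [crossDot, ← dotProduct_add, ← add_dotProduct]
  rfl

lemma crossDot_neg_neg (m m' : κ ⊕ κ → ℤ) : crossDot (-m) (-m') = crossDot m m' := by
  simp [crossDot, dotProduct]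

variable [NeZero M]

/-- The plane wave on the discrete torus `(ℤ/M)^κ` with the momentum part of `m` as frequency. -/
def planeWave (m : κ ⊕ κ → ℤ) (x : κ → ZMod M) : ℂ :=
  ZMod.stdAddChar ((fun j ↦ (m (.inr j) : ZMod M)) ⬝ᵥ x)

lemma planeWave_add_left (m m' : κ ⊕ κ → ℤ) (x : κ → ZMod M) :
    planeWave M (m + m') x = planeWave M m x * planeWave M m' x := by
  rw [planeWave, planeWave, planeWave, ← AddChar.map_add_eq_mul, ← add_dotProduct]
  simp [Pi.add_def]

lemma planeWave_add_right (m : κ ⊕ κ → ℤ) (x y : κ → ZMod M) :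
    planeWave M m (x + y) = planeWave M m x * planeWave M m y := by
  rw [planeWave, planeWave, planeWave, ← AddChar.map_add_eq_mul, ← dotProduct_add]

lemma planeWave_zero_left (x : κ → ZMod M) : planeWave M (0 : κ ⊕ κ → ℤ) x = 1 := by
  simp [planeWave, dotProduct]

lemma planeWave_neg_left (m : κ ⊕ κ → ℤ) (x : κ → ZMod M) :
    planeWave M (-m) x = planeWave M m (-x) := by
  simp [planeWave, dotProduct]

lemma star_planeWave (m : κ ⊕ κ → ℤ) (x : κ → ZMod M) :
    star (planeWave M m x) = planeWave M (-m) x := by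
  rw [planeWave_neg_left, planeWave, planeWave, dotProduct_neg, AddChar.map_neg_eq_conj]
  rfl

lemma planeWave_shift (m m' : κ ⊕ κ → ℤ) :
    planeWave M m' (shift M m) = phase M (2 * crossDot m m') := by
  rw [phase_two_mul, planeWave, crossDot, dotProduct_comm]
  simp [dotProduct, shift]

/-- The Weyl matrix of `m`: a shift composed with a plane wave. The phase makes `weyl M (-m)` the
adjoint of `weyl M m`. -/
def weyl (m : κ ⊕ κ → ℤ) : Matrix (κ → ZMod M) (κ → ZMod M) ℂ :=
  Matrix.of fun x y ↦ if y = x + shift M m then phase M (crossDot m m) * planeWave M m x else 0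

lemma weyl_zero : weyl M (0 : κ ⊕ κ → ℤ) = 1 := by
  ext x y
  simp [weyl, shift_zero, crossDot, planeWave_zero_left, Matrix.one_apply, eq_comm]

lemma weyl_neg_neg (m : κ ⊕ κ → ℤ) (x y : κ → ZMod M) :
    weyl M m (-x) (-y) = weyl M (-m) x y := by
  have support_iff : -y = -x + shift M m ↔ y = x + shift M (-m) := by
    rw [shift_neg, neg_eq_iff_eq_neg, neg_add, neg_neg]
  simp [weyl, support_iff, crossDot_neg_neg, planeWave_neg_left]

lemma conjTranspose_weyl (m : κ ⊕ κ → ℤ) : (weyl M m)ᴴ = weyl M (-m) := by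
  ext x y
  have support_iff : y = x + shift M (-m) ↔ x = y + shift M m := by
    rw [shift_neg, ← sub_eq_add_neg, eq_sub_iff_add_eq, eq_comm]
  simp only [conjTranspose_apply, weyl, Matrix.of_apply, support_iff]
  split_ifs with hx
  · have phase_split : phase M (-crossDot m m) =
        phase M (crossDot m m) * phase M (2 * -crossDot m m) := by
      rw [← AddChar.map_add_eq_mul]
      ring_nf
    have crossDot_neg_right : crossDot m (-m) = -crossDot m m := dotProduct_neg _ _
    rw [star_mul', star_phase, star_planeWave, hx, planeWave_add_right, planeWave_shift,
      crossDot_neg_neg, crossDot_neg_right, phase_split]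
    ring
  · exact star_zero _

variable [DecidableEq κ]

lemma weyl_mul (m m' : κ ⊕ κ → ℤ) :
    weyl M m * weyl M m' = phase M (crossDot m m' - crossDot m' m) • weyl M (m + m') := by
  ext x y
  rw [Matrix.mul_apply, Finset.sum_eq_single (x + shift M m) (fun z _ hz ↦ by simp [weyl, hz])
    (by simp)]
  by_cases hy : y = x + (shift M m + shift M m')
  · have phase_split : phase M (2 * crossDot m m') =
        phase M (crossDot m m' - crossDot m' m) * phase M (crossDot m m') *
          phase M (crossDot m' m) := by
      rw [← AddChar.map_add_eq_mul, ← AddChar.map_add_eq_mul]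
      ring_nf
    simp only [weyl, Matrix.of_apply, Matrix.smul_apply, smul_eq_mul, if_true, shift_add, add_assoc,
      hy, planeWave_add_right, planeWave_shift, planeWave_add_left, crossDot_add_self,
      AddChar.map_add_eq_mul, phase_split]
    ring
  · simp [weyl, shift_add, add_assoc, hy]

lemma weyl_mem_unitary (m : κ ⊕ κ → ℤ) : weyl M m ∈ unitary (Matrix _ _ ℂ) := by
  have crossDot_neg_sub (m : κ ⊕ κ → ℤ) : crossDot m (-m) - crossDot (-m) m = 0 := by
    simp [crossDot, dotProduct]
  have weyl_mul_neg (m : κ ⊕ κ → ℤ) : weyl M m * weyl M (-m) = 1 := by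
    simp [weyl_mul, crossDot_neg_sub, weyl_zero]
  rw [Unitary.mem_iff, star_eq_conjTranspose, conjTranspose_weyl]
  exact ⟨by simpa using weyl_mul_neg (-m), weyl_mul_neg m⟩

end Weyl

/-! ### Weyl quantization -/

section Quantization

open AddMonoidAlgebra TrigPoly
open scoped Kronecker Matrix.Norms.L2Operator

variable {J κ : Type*} [Fintype J] [DecidableEq J] [Fintype κ]

/-- The embedding `C ↦ C ⊗ 1` of matrix algebras. -/
def kroneckerOne (J X : Type*) [Fintype J] [DecidableEq J] [Fintype X] [DecidableEq X] :
    Matrix J J ℂ →⋆ₐ[ℂ] Matrix (J × X) (J × X) ℂ where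
  toFun C := C ⊗ₖ 1
  map_one' := one_kronecker_one
  map_mul' C C' := by rw [← mul_kronecker_mul, one_mul]
  map_zero' := zero_kronecker 1
  map_add' C C' := add_kronecker C C' 1
  commutes' c := by simp [Algebra.algebraMap_eq_smul_one, smul_kronecker]
  map_star' C := by simp [star_eq_conjTranspose, conjTranspose_kronecker]

lemma kroneckerOne_apply {X : Type*} [Fintype X] [DecidableEq X] (C : Matrix J J ℂ) :
    kroneckerOne J X C = C ⊗ₖ 1 :=
  rfl

/-- The embedding `C ↦ 1 ⊗ C` of matrix algebras. -/
def oneKronecker (J X : Type*) [Fintype J] [DecidableEq J] [Fintype X] [DecidableEq X] :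
    Matrix X X ℂ →⋆ₐ[ℂ] Matrix (J × X) (J × X) ℂ where
  toFun C := 1 ⊗ₖ C
  map_one' := one_kronecker_one
  map_mul' C C' := by rw [← mul_kronecker_mul, one_mul]
  map_zero' := kronecker_zero 1
  map_add' C C' := kronecker_add 1 C C'
  commutes' c := by simp [Algebra.algebraMap_eq_smul_one, kronecker_smul]
  map_star' C := by simp [star_eq_conjTranspose, conjTranspose_kronecker]

lemma oneKronecker_apply {X : Type*} [Fintype X] [DecidableEq X] (C : Matrix X X ℂ) :
    oneKronecker J X C = 1 ⊗ₖ C :=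
  rfl

lemma norm_kronecker_le_of_mem_unitary {X : Type*} [Fintype X] [DecidableEq X] (C : Matrix J J ℂ)
    {U : Matrix X X ℂ} (hU : U ∈ unitary (Matrix X X ℂ)) : ‖C ⊗ₖ U‖ ≤ ‖C‖ :=
  calc ‖C ⊗ₖ U‖ = ‖(C ⊗ₖ (1 : Matrix X X ℂ)) * ((1 : Matrix J J ℂ) ⊗ₖ U)‖ := by
        rw [← mul_kronecker_mul, mul_one, one_mul]
    _ = ‖C ⊗ₖ (1 : Matrix X X ℂ)‖ :=
        CStarRing.norm_mul_mem_unitary _ (Unitary.map_mem (oneKronecker J X) hU)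
    _ ≤ ‖C‖ := NonUnitalStarAlgHom.norm_apply_le (kroneckerOne J X) C

/-- Weyl quantization on the discrete torus `(ℤ/M)^κ`: the monomial `e^{2πi m·θ}` becomes the Weyl
matrix of `m`. -/
def quantize (M : ℕ) [NeZero M] : TrigPoly (κ ⊕ κ) (Matrix J J ℂ) →ₗ[ℂ]
    Matrix (J × (κ → ZMod M)) (J × (κ → ZMod M)) ℂ :=
  (Finsupp.lsum ℂ fun m ↦ kroneckerBilinear.flip (weyl M m)) ∘ₗ
    (coeffLinearEquiv ℂ).toLinearMap

section FixedSize

variable (M : ℕ) [NeZero M]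

lemma quantize_eq_sum (a : TrigPoly (κ ⊕ κ) (Matrix J J ℂ)) :
    quantize M a = ∑ m ∈ a.coeff.support, a.coeff m ⊗ₖ weyl M m :=
  rfl

lemma quantize_single (m : κ ⊕ κ → ℤ) (C : Matrix J J ℂ) :
    quantize M (single m C) = C ⊗ₖ weyl M m :=
  Finsupp.sum_single_index (zero_kronecker _)

lemma quantize_one : quantize M (1 : TrigPoly (κ ⊕ κ) (Matrix J J ℂ)) = 1 := by
  rw [one_def, quantize_single, weyl_zero, one_kronecker_one]

variable [DecidableEq κ]

lemma norm_quantize_le (a : TrigPoly (κ ⊕ κ) (Matrix J J ℂ)) : ‖quantize M a‖ ≤ sumNorm a :=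
  norm_sum_le_of_le _ fun m _ ↦ norm_kronecker_le_of_mem_unitary _ (weyl_mem_unitary M m)

end FixedSize

variable [DecidableEq κ]

/-- `A` quantizes the symbol `a` up to an error that vanishes as the discrete torus grows. -/
def IsQuantization (A : ∀ M : ℕ+, Matrix (J × (κ → ZMod M)) (J × (κ → ZMod M)) ℂ)
    (a : TrigPoly (κ ⊕ κ) (Matrix J J ℂ)) : Prop :=
  Tendsto (fun M : ℕ+ ↦ ‖A M - quantize M a‖) atTop (𝓝 0)

namespace IsQuantization

variable {A B : ∀ M : ℕ+, Matrix (J × (κ → ZMod M)) (J × (κ → ZMod M)) ℂ}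
  {a b : TrigPoly (κ ⊕ κ) (Matrix J J ℂ)}

lemma add (hA : IsQuantization A a) (hB : IsQuantization B b) :
    IsQuantization (fun M ↦ A M + B M) (a + b) := by
  refine squeeze_zero (fun _ ↦ norm_nonneg _) (fun M ↦ ?_) (by simpa using Tendsto.add hA hB)
  rw [map_add, add_sub_add_comm]
  exact norm_add_le _ _

lemma sub (hA : IsQuantization A a) (hB : IsQuantization B b) :
    IsQuantization (fun M ↦ A M - B M) (a - b) := by
  refine squeeze_zero (fun _ ↦ norm_nonneg _) (fun M ↦ ?_) (by simpa using Tendsto.add hA hB)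
  rw [map_sub, sub_sub_sub_comm]
  exact norm_sub_le _ _

lemma of_quantize (a : TrigPoly (κ ⊕ κ) (Matrix J J ℂ)) :
    IsQuantization (fun M : ℕ+ ↦ quantize M a) a := by
  simp [IsQuantization]

lemma quantize_single_mul_quantize_single (m m' : κ ⊕ κ → ℤ) (C C' : Matrix J J ℂ) :
    IsQuantization (fun M : ℕ+ ↦ quantize M (single m C) * quantize M (single m' C'))
      (single m C * single m' C') := by
  have error (M : ℕ+) : quantize M (single m C) * quantize M (single m' C') -
      quantize M (single m C * single m' C') =
        (phase M (crossDot m m' - crossDot m' m) - 1) •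
          quantize M (single m C * single m' C') := by
    rw [single_mul_single, quantize_single, quantize_single, quantize_single,
      ← mul_kronecker_mul, weyl_mul, kronecker_smul, sub_smul, one_smul]
  have phase_sub_one : Tendsto (fun M : ℕ+ ↦ ‖phase M (crossDot m m' - crossDot m' m) - 1‖)
      atTop (𝓝 0) := by
    simpa using (((tendsto_phase _).comp tendsto_PNat_val_atTop_atTop).sub_const 1).norm
  have bound_tendsto := phase_sub_one.mul_const (sumNorm (single m C * single m' C'))
  rw [zero_mul] at bound_tendsto
  refine squeeze_zero (fun _ ↦ norm_nonneg _) (fun M ↦ ?_) bound_tendsto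
  rw [error, norm_smul]
  exact mul_le_mul_of_nonneg_left (norm_quantize_le _ _) (norm_nonneg _)

lemma quantize_mul_quantize (a b : TrigPoly (κ ⊕ κ) (Matrix J J ℂ)) :
    IsQuantization (fun M : ℕ+ ↦ quantize M a * quantize M b) (a * b) := by
  induction a using AddMonoidAlgebra.induction_linear with
  | zero => simp [IsQuantization]
  | add a a' ha ha' => simpa only [map_add, add_mul] using ha.add ha'
  | single m C =>
    induction b using AddMonoidAlgebra.induction_linear with
    | zero => simp [IsQuantization]
    | add b b' hb hb' => simpa only [map_add, mul_add] using hb.add hb'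
    | single m' C' => exact quantize_single_mul_quantize_single m m' C C'

lemma mul (hA : IsQuantization A a) (hB : IsQuantization B b) :
    IsQuantization (fun M ↦ A M * B M) (a * b) := by
  have bound (M : ℕ+) : ‖A M * B M - quantize M (a * b)‖ ≤
      ‖A M - quantize M a‖ * (‖B M - quantize M b‖ + sumNorm b) +
        sumNorm a * ‖B M - quantize M b‖ +
        ‖quantize M a * quantize M b - quantize M (a * b)‖ := by
    have split : A M * B M - quantize M (a * b) =
        (A M - quantize M a) * (B M - quantize M b + quantize M b) +
          quantize M a * (B M - quantize M b) +
          (quantize M a * quantize M b - quantize M (a * b)) := by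
      noncomm_ring
    rw [split]
    refine norm_add₃_le.trans ?_
    gcongr
    · refine (norm_mul_le _ _).trans (mul_le_mul_of_nonneg_left ?_ (norm_nonneg _))
      exact (norm_add_le _ _).trans (add_le_add_right (norm_quantize_le _ _) _)
    · exact (norm_mul_le _ _).trans
        (mul_le_mul_of_nonneg_right (norm_quantize_le _ _) (norm_nonneg _))
  refine squeeze_zero (fun _ ↦ norm_nonneg _) bound ?_
  simpa using ((Tendsto.mul hA (hB.add_const (sumNorm b))).add (hB.const_mul (sumNorm a))).add
    (quantize_mul_quantize a b)

lemma pow (hA : IsQuantization A a) (n : ℕ) : IsQuantization (fun M ↦ A M ^ n) (a ^ n) := by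
  induction n with
  | zero => simp [IsQuantization, quantize_one]
  | succ n ih => simpa only [pow_succ] using ih.mul hA

-- `‖A‖ ^ n = ‖A ^ n‖` for self-adjoint `A` and `n` a power of two, so the crude bound of
-- `‖quantize M (a ^ n)‖` by the sum of the coefficient norms loses nothing as `n → ∞`.
lemma eventually_norm_le (hA : IsQuantization A a) (hA' : ∀ M, (A M).IsHermitian) {ρ σ : ℝ}
    (hρσ : ρ < σ) (ha : ∀ z, ‖eval z a‖ ≤ ρ) : ∀ᶠ M in atTop, ‖A M‖ ≤ σ := by
  have hσ : 0 < σ := ((norm_nonneg _).trans (ha 0)).trans_lt hρσ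
  obtain ⟨j, hj⟩ : ∃ j : ℕ, sumNorm (a ^ 2 ^ j) / σ ^ 2 ^ j < 1 :=
    (((tendsto_sumNorm_pow_div_pow hρσ ha).comp (tendsto_pow_atTop_atTop_of_one_lt
      one_lt_two)).eventually_lt_const one_pos).exists
  rw [div_lt_one (by positivity)] at hj
  filter_upwards [(hA.pow (2 ^ j)).eventually_lt_const (sub_pos.mpr hj)] with M hM
  have norm_pow : ‖A M ^ 2 ^ j‖ = ‖A M‖ ^ 2 ^ j :=
    congrArg NNReal.toReal ((hA' M).isSelfAdjoint.nnnorm_pow_two_pow j)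
  refine le_of_pow_le_pow_left₀ (n := 2 ^ j) (by positivity) hσ.le ?_
  calc ‖A M‖ ^ 2 ^ j
      = ‖A M ^ 2 ^ j - quantize M (a ^ 2 ^ j) + quantize M (a ^ 2 ^ j)‖ := by
        rw [sub_add_cancel, norm_pow]
    _ ≤ (σ ^ 2 ^ j - sumNorm (a ^ 2 ^ j)) + sumNorm (a ^ 2 ^ j) :=
        (norm_add_le _ _).trans (add_le_add hM.le (norm_quantize_le _ _))
    _ = σ ^ 2 ^ j := sub_add_cancel _ _

end IsQuantization

end Quantization

/-! ### Lattice Dirac operators -/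

section Dirac

open AddMonoidAlgebra TrigPoly
open scoped Kronecker Matrix.Norms.L2Operator ComplexOrder

variable {J : Type*}

section Coefficients

variable {ι : Type*}

/-- The coefficients of the symbol are Hermitian, so that its value at `-θ` is the adjoint of its
value at `θ`. -/
def HasHermitianCoeff [Fintype J] [DecidableEq J] (a : TrigPoly ι (Matrix J J ℂ)) : Prop :=
  ∀ m, (a.coeff m).IsHermitian

variable [Fintype J] [DecidableEq J]

namespace HasHermitianCoeff

variable {a b : TrigPoly ι (Matrix J J ℂ)}

lemma zero : HasHermitianCoeff (0 : TrigPoly ι (Matrix J J ℂ)) := fun _ ↦ isHermitian_zero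

lemma single {C : Matrix J J ℂ} (hC : C.IsHermitian) (m : ι → ℤ) :
    HasHermitianCoeff (AddMonoidAlgebra.single m C) := fun m' ↦ by
  classical
  rw [coeff_single, Finsupp.single_apply]
  split_ifs
  exacts [hC, isHermitian_zero]

lemma add (ha : HasHermitianCoeff a) (hb : HasHermitianCoeff b) : HasHermitianCoeff (a + b) :=
  fun m ↦ (ha m).add (hb m)

lemma sub (ha : HasHermitianCoeff a) (hb : HasHermitianCoeff b) : HasHermitianCoeff (a - b) :=
  fun m ↦ (ha m).sub (hb m)

lemma smul (ha : HasHermitianCoeff a) (t : ℝ) : HasHermitianCoeff (t • a) :=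
  fun m ↦ (ha m).smul (.all t)

lemma lineMap (ha : HasHermitianCoeff a) (hb : HasHermitianCoeff b) (t : ℝ) :
    HasHermitianCoeff (AffineMap.lineMap a b t) := by
  rw [AffineMap.lineMap_apply_module]
  exact (ha.smul _).add (hb.smul _)

lemma sum {β : Type*} {s : Finset β} {f : β → TrigPoly ι (Matrix J J ℂ)}
    (hf : ∀ b ∈ s, HasHermitianCoeff (f b)) : HasHermitianCoeff (∑ b ∈ s, f b) :=
  Finset.sum_induction f HasHermitianCoeff (fun _ _ ↦ add) zero hf

lemma mapCoeff {R : Type*} [Fintype R] [DecidableEq R] (ha : HasHermitianCoeff a)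
    (φ : Matrix J J ℂ →⋆ₐ[ℂ] Matrix R R ℂ) : HasHermitianCoeff (mapCoeff φ a) := fun m ↦ by
  rw [coeff_mapCoeff]
  exact (ha m).isSelfAdjoint.map φ

end HasHermitianCoeff

variable [Fintype ι]

lemma eval_reflect_of_hasHermitianCoeff {a : TrigPoly ι (Matrix J J ℂ)}
    (ha : HasHermitianCoeff a) (z : UnitAddTorus ι) :
    eval z (reflect a) = (eval z a)ᴴ := by
  conv_lhs => rw [← sum_coeff_single a]
  rw [eval_eq_sum z a]
  simp only [Finsupp.sum, map_sum, reflect_single, eval_single, conjTranspose_sum,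
    conjTranspose_smul, (ha _).eq, mFourier_neg, starRingEnd_apply]

/-- The conditions on the symbols of a family of lattice Dirac operators under which these are
Hermitian with a spectral gap at `0` that is uniform in the size of the lattice. -/
structure IsGapped (F G : TrigPoly ι (Matrix J J ℂ)) : Prop where
  hasHermitianCoeff_left : HasHermitianCoeff F
  hasHermitianCoeff_right : HasHermitianCoeff G
  reflect_left : reflect F = -F
  commute : Commute F G
  isUnit_eval : ∀ z, IsUnit (eval z F) ∨ IsUnit (eval z G)

lemma IsGapped.posDef_eval {F G : TrigPoly ι (Matrix J J ℂ)} (h : IsGapped F G)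
    (z : UnitAddTorus ι) : (eval z (reflect F * F + reflect G * G)).PosDef := by
  rw [map_add, map_mul, map_mul, eval_reflect_of_hasHermitianCoeff h.hasHermitianCoeff_left,
    eval_reflect_of_hasHermitianCoeff h.hasHermitianCoeff_right]
  rcases h.isUnit_eval z with hF | hG
  · exact (PosDef.conjTranspose_mul_self _ (mulVec_injective_of_isUnit hF)).add_posSemidef
      (posSemidef_conjTranspose_mul_self _)
  · exact .posSemidef_add (posSemidef_conjTranspose_mul_self _)
      (PosDef.conjTranspose_mul_self _ (mulVec_injective_of_isUnit hG))

end Coefficients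

variable {κ : Type*} [Fintype κ] (M : ℕ)

section Parity

variable (κ)

/-- The parity operator `f ↦ f(-·)` on the discrete torus `(ℤ/M)^κ`. -/
def parity : Matrix (κ → ZMod M) (κ → ZMod M) ℂ := (Equiv.neg (κ → ZMod M)).permMatrix ℂ

lemma isHermitian_parity : (parity κ M).IsHermitian := by
  rw [IsHermitian, parity, conjTranspose_permMatrix]
  rfl

variable [DecidableEq κ] [NeZero M]

lemma parity_mul_parity : parity κ M * parity κ M = 1 := by
  rw [parity, ← permMatrix_mul, ← permMatrix_one]
  congr 1
  ext
  simp

variable {κ}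

lemma parity_mul_weyl_mul_parity (m : κ ⊕ κ → ℤ) :
    parity κ M * weyl M m * parity κ M = weyl M (-m) := by
  rw [parity, Equiv.Perm.permMatrix, PEquiv.toMatrix_toPEquiv_mul, PEquiv.mul_toMatrix_toPEquiv]
  ext x y
  exact weyl_neg_neg M m x y

end Parity

variable [DecidableEq J]

variable (J κ) in
/-- The parity operator on `J`-tuples of functions on the discrete torus `(ℤ/M)^κ`. -/
def tupleParity : Matrix (J × (κ → ZMod M)) (J × (κ → ZMod M)) ℂ := 1 ⊗ₖ parity κ M

lemma isHermitian_tupleParity : (tupleParity J κ M).IsHermitian := by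
  rw [IsHermitian, tupleParity, conjTranspose_kronecker, conjTranspose_one,
    (isHermitian_parity κ M).eq]

variable [NeZero M] [Fintype J]

lemma conjTranspose_quantize {a : TrigPoly (κ ⊕ κ) (Matrix J J ℂ)}
    (ha : HasHermitianCoeff a) : (quantize M a)ᴴ = quantize M (reflect a) := by
  conv_rhs => rw [← sum_coeff_single a]
  rw [quantize_eq_sum]
  simp only [Finsupp.sum, map_sum, reflect_single, quantize_single, conjTranspose_sum,
    conjTranspose_kronecker, (ha _).eq, conjTranspose_weyl]

variable [DecidableEq κ]

lemma tupleParity_mul_tupleParity : tupleParity J κ M * tupleParity J κ M = 1 := by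
  rw [tupleParity, ← mul_kronecker_mul, parity_mul_parity, one_mul, one_kronecker_one]

lemma tupleParity_mem_unitary : tupleParity J κ M ∈ unitary (Matrix _ _ ℂ) := by
  rw [Unitary.mem_iff, star_eq_conjTranspose, (isHermitian_tupleParity M).eq]
  exact ⟨tupleParity_mul_tupleParity M, tupleParity_mul_tupleParity M⟩

lemma norm_tupleParity_mul (A : Matrix (J × (κ → ZMod M)) (J × (κ → ZMod M)) ℂ) :
    ‖tupleParity J κ M * A‖ = ‖A‖ :=
  CStarRing.norm_mem_unitary_mul A (tupleParity_mem_unitary (J := J) (κ := κ) M)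

lemma tupleParity_mul_quantize_mul_tupleParity (a : TrigPoly (κ ⊕ κ) (Matrix J J ℂ)) :
    tupleParity J κ M * quantize M a * tupleParity J κ M = quantize M (reflect a) := by
  induction a using AddMonoidAlgebra.induction_linear with
  | zero => simp
  | add a b ha hb => simp only [map_add, mul_add, add_mul, ha, hb]
  | single m C =>
    rw [reflect_single, quantize_single, quantize_single, tupleParity, ← mul_kronecker_mul,
      ← mul_kronecker_mul, one_mul, mul_one, parity_mul_weyl_mul_parity]

lemma quantize_mul_tupleParity (a : TrigPoly (κ ⊕ κ) (Matrix J J ℂ)) :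
    quantize M a * tupleParity J κ M = tupleParity J κ M * quantize M (reflect a) := by
  rw [← tupleParity_mul_quantize_mul_tupleParity, ← mul_assoc, ← mul_assoc,
    tupleParity_mul_tupleParity, one_mul]

/-- The lattice Dirac operator with kinetic symbol `i F` and mass symbol `G`. -/
def dirac (F G : TrigPoly (κ ⊕ κ) (Matrix J J ℂ)) :
    Matrix (J × (κ → ZMod M)) (J × (κ → ZMod M)) ℂ :=
  Complex.I • quantize M F + tupleParity J κ M * quantize M G

lemma norm_dirac_le (F G : TrigPoly (κ ⊕ κ) (Matrix J J ℂ)) :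
    ‖dirac M F G‖ ≤ sumNorm F + sumNorm G := by
  refine (norm_add_le _ _).trans (add_le_add ?_ ?_)
  · simpa [norm_smul] using norm_quantize_le M F
  · rw [norm_tupleParity_mul]
    exact norm_quantize_le M G

lemma dirac_sub (F F' G G' : TrigPoly (κ ⊕ κ) (Matrix J J ℂ)) :
    dirac M (F - F') (G - G') = dirac M F G - dirac M F' G' := by
  simp only [dirac, map_sub, smul_sub, mul_sub]
  abel

lemma dirac_smul (t : ℝ) (F G : TrigPoly (κ ⊕ κ) (Matrix J J ℂ)) :
    dirac M (t • F) (t • G) = t • dirac M F G := by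
  simp only [dirac, LinearMap.map_smul_of_tower, smul_add, mul_smul_comm, smul_comm t]

namespace IsGapped

variable {F G : TrigPoly (κ ⊕ κ) (Matrix J J ℂ)}

lemma isHermitian_dirac (h : IsGapped F G) : (dirac M F G).IsHermitian := by
  rw [IsHermitian, dirac, conjTranspose_add, conjTranspose_smul, conjTranspose_mul,
    conjTranspose_quantize M h.hasHermitianCoeff_left,
    conjTranspose_quantize M h.hasHermitianCoeff_right, (isHermitian_tupleParity M).eq,
    ← tupleParity_mul_quantize_mul_tupleParity M G, mul_assoc, tupleParity_mul_tupleParity, mul_one,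
    h.reflect_left]
  simp

lemma dirac_mul_dirac (h : IsGapped F G) : dirac M F G * dirac M F G =
    quantize M (reflect F) * quantize M F + quantize M (reflect G) * quantize M G +
      Complex.I • (tupleParity J κ M *
        (quantize M G * quantize M F - quantize M F * quantize M G)) := by
  have cross : quantize M F * (tupleParity J κ M * quantize M G) =
      -(tupleParity J κ M * (quantize M F * quantize M G)) := by
    rw [← mul_assoc, quantize_mul_tupleParity, h.reflect_left, map_neg]
    noncomm_ring
  have mass : tupleParity J κ M * (quantize M G * (tupleParity J κ M * quantize M G)) =
      quantize M (reflect G) * quantize M G := by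
    rw [← tupleParity_mul_quantize_mul_tupleParity]
    noncomm_ring
  have kinetic : Complex.I • quantize M F * Complex.I • quantize M F =
      quantize M (reflect F) * quantize M F := by
    rw [smul_mul_smul_comm, Complex.I_mul_I, h.reflect_left, map_neg, neg_mul, neg_one_smul]
  rw [dirac, add_mul, mul_add, mul_add, kinetic, smul_mul_assoc, cross, mul_smul_comm,
    mul_assoc, mul_assoc, mass, mul_sub]
  module

lemma isQuantization_dirac_mul_dirac (h : IsGapped F G) :
    IsQuantization (fun M : ℕ+ ↦ dirac M F G * dirac M F G)
      (reflect F * F + reflect G * G) := by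
  have commutator : IsQuantization
      (fun M : ℕ+ ↦ quantize M G * quantize M F - quantize M F * quantize M G) 0 := by
    have := (IsQuantization.quantize_mul_quantize G F).sub (.quantize_mul_quantize F G)
    rwa [h.commute.eq, sub_self] at this
  have parity_commutator : IsQuantization (fun M : ℕ+ ↦ Complex.I • (tupleParity J κ M *
      (quantize M G * quantize M F - quantize M F * quantize M G))) 0 := by
    simpa only [IsQuantization, map_zero, sub_zero, norm_smul, Complex.norm_I, one_mul,
      norm_tupleParity_mul] using commutator
  have square := ((IsQuantization.quantize_mul_quantize (reflect F) F).add
    (.quantize_mul_quantize (reflect G) G)).add parity_commutator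
  rw [add_zero] at square
  rwa [show (fun M : ℕ+ ↦ dirac M F G * dirac M F G) = _ from
    funext fun M ↦ h.dirac_mul_dirac M]

end IsGapped
end Dirac

/-! ### The spectral gap -/

lemma norm_smul_one_sub_lt {A : Type*} [CStarAlgebra A] [PartialOrder A] [StarOrderedRing A]
    {a : A} (ha : IsStrictlyPositive a) {K : ℝ} (hK : 0 < K) (haK : ‖a‖ ≤ K) :
    ‖K • (1 : A) - a‖ < K := by
  rcases subsingleton_or_nontrivial A with _ | _
  · simpa [Subsingleton.elim _ (0 : A)] using hK
  obtain ⟨c, hc, hca⟩ : ∃ c > 0, algebraMap ℝ A c ≤ a :=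
    (CFC.exists_pos_algebraMap_le_iff ha.isSelfAdjoint).2 fun _ hx ↦ ha.spectrum_pos hx
  have le_K : a ≤ algebraMap ℝ A K :=
    ha.isSelfAdjoint.le_algebraMap_norm_self.trans (algebraMap_mono A haK)
  rw [← Algebra.algebraMap_eq_smul_one]
  refine ((CStarAlgebra.norm_le_iff_le_algebraMap _ (le_max_right (K - c) 0)
    (sub_nonneg.2 le_K)).2 ?_).trans_lt (max_lt (sub_lt_self K hc) hK)
  calc algebraMap ℝ A K - a ≤ algebraMap ℝ A K - algebraMap ℝ A c := sub_le_sub_left hca _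
    _ = algebraMap ℝ A (K - c) := (map_sub _ _ _).symm
    _ ≤ algebraMap ℝ A (max (K - c) 0) := algebraMap_mono A (le_max_left _ _)

section Gap

open TrigPoly
open scoped Matrix.Norms.L2Operator MatrixOrder ComplexOrder

lemma abs_sub_sq_eigenvalues_le {n : Type*} [Fintype n] [DecidableEq n] {A : Matrix n n ℂ}
    (hA : A.IsHermitian) (K : ℝ) (i : n) :
    |K - hA.eigenvalues i ^ 2| ≤ ‖K • (1 : Matrix n n ℂ) - A * A‖ := by
  set v := hA.eigenvectorBasis i
  have norm_v : ‖v‖ = 1 := hA.eigenvectorBasis.norm_eq_one i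
  have eigenvector : (K • (1 : Matrix n n ℂ) - A * A) *ᵥ v =
      (K - hA.eigenvalues i ^ 2) • (v : n → ℂ) := by
    rw [sub_mulVec, smul_mulVec, one_mulVec, ← mulVec_mulVec, hA.mulVec_eigenvectorBasis,
      mulVec_smul, hA.mulVec_eigenvectorBasis, smul_smul, ← sq, sub_smul]
  have bound := l2_opNorm_mulVec (K • (1 : Matrix n n ℂ) - A * A) v
  rw [eigenvector] at bound
  simpa [norm_smul, norm_v] using bound

variable {J κ : Type*} [Fintype J] [DecidableEq J] [Fintype κ]

namespace IsGapped

variable {F G : TrigPoly (κ ⊕ κ) (Matrix J J ℂ)}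

lemma exists_norm_smul_one_sub_eval_le (h : IsGapped F G) :
    ∃ K ρ : ℝ, ρ < K ∧ ∀ z, ‖eval z (K • 1 - (reflect F * F + reflect G * G))‖ ≤ ρ := by
  set S := reflect F * F + reflect G * G
  obtain ⟨C, hC⟩ := isCompact_univ.exists_bound_of_continuousOn (continuous_eval S).continuousOn
  set K := max C 1
  obtain ⟨z₀, -, hz₀⟩ := isCompact_univ.exists_isMaxOn Set.univ_nonempty
    (continuous_eval (K • 1 - S)).norm.continuousOn
  refine ⟨K, ‖eval z₀ (K • 1 - S)‖, ?_, fun z ↦ hz₀ (Set.mem_univ z)⟩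
  rw [map_sub, AlgHom.map_smul_of_tower, map_one]
  exact norm_smul_one_sub_lt (h.posDef_eval z₀).isStrictlyPositive
    (one_pos.trans_le (le_max_right _ _)) ((hC z₀ (Set.mem_univ _)).trans (le_max_left _ _))

variable [DecidableEq κ]

lemma exists_eventually_le_abs_eigenvalues (h : IsGapped F G) :
    ∃ c > 0, ∀ᶠ M : ℕ+ in atTop, ∀ i, c ≤ |(h.isHermitian_dirac M).eigenvalues i| := by
  obtain ⟨K, ρ, hρ, hS⟩ := h.exists_norm_smul_one_sub_eval_le
  obtain ⟨σ, hρσ, hσK⟩ := exists_between hρ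
  have isQuantization := (IsQuantization.of_quantize (K • 1)).sub h.isQuantization_dirac_mul_dirac
  have isHermitian (M : ℕ+) :
      (quantize M (K • (1 : TrigPoly (κ ⊕ κ) (Matrix J J ℂ))) -
        dirac M F G * dirac M F G).IsHermitian := by
    rw [LinearMap.map_smul_of_tower, quantize_one, IsHermitian, conjTranspose_sub,
      conjTranspose_smul, conjTranspose_one, conjTranspose_mul, (h.isHermitian_dirac M).eq,
      star_trivial]
  refine ⟨√(K - σ), Real.sqrt_pos.2 (sub_pos.2 hσK), ?_⟩
  filter_upwards [isQuantization.eventually_norm_le isHermitian hρσ hS] with M hM i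
  rw [LinearMap.map_smul_of_tower, quantize_one] at hM
  have sq_bound := (abs_sub_sq_eigenvalues_le (h.isHermitian_dirac M) K i).trans hM
  rw [← Real.sqrt_sq_eq_abs]
  exact Real.sqrt_le_sqrt
    (by linarith [le_abs_self (K - (h.isHermitian_dirac M).eigenvalues i ^ 2)])

end IsGapped
end Gap

/-! ### The positive index of inertia -/

section PosIndex

open scoped Kronecker Matrix.Norms.L2Operator InnerProductSpace

variable {n : Type*} [Fintype n] [DecidableEq n]

/-- The positive index of inertia of a Hermitian matrix: the number of its positive eigenvalues with
multiplicity. It is defined for every matrix, through the roots of the characteristic polynomial. -/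
def posIndex (A : Matrix n n ℂ) : ℕ := A.charpoly.roots.countP fun z ↦ 0 < z.re

lemma posIndex_reindex {n' : Type*} [Fintype n'] [DecidableEq n'] (e : n ≃ n')
    (A : Matrix n n ℂ) : posIndex (reindex e e A) = posIndex A := by
  rw [posIndex, charpoly_reindex, posIndex]

lemma charmatrix_one_kronecker {b : Type*} [Fintype b] [DecidableEq b] (A : Matrix n n ℂ) :
    ((1 : Matrix b b ℂ) ⊗ₖ A).charmatrix = (1 : Matrix b b (Polynomial ℂ)) ⊗ₖ A.charmatrix := by
  ext ⟨i, x⟩ ⟨j, y⟩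
  by_cases hij : i = j <;> simp [charmatrix_apply, diagonal_apply, one_apply, hij]

lemma posIndex_one_kronecker {b : Type*} [Fintype b] [DecidableEq b] (A : Matrix n n ℂ) :
    posIndex ((1 : Matrix b b ℂ) ⊗ₖ A) = Fintype.card b * posIndex A := by
  rw [posIndex, charpoly, charmatrix_one_kronecker, det_kronecker, det_one, one_pow, one_mul,
    Polynomial.roots_pow, Multiset.countP_nsmul, ← charpoly, posIndex]

variable {A A' : Matrix n n ℂ}

lemma posIndex_eq_card (hA : A.IsHermitian) :
    posIndex A = Fintype.card {i // 0 < hA.eigenvalues i} := by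
  rw [posIndex, hA.roots_charpoly_eq_eigenvalues, Multiset.countP_map, Fintype.card_subtype]
  rfl

lemma two_mul_posIndex (hA : A.IsHermitian) (hA' : A * A = 1) :
    (2 * posIndex A : ℂ) = Fintype.card n + A.trace := by
  have eigenvalue_eq (i : n) : hA.eigenvalues i = 1 ∨ hA.eigenvalues i = -1 := by
    have : |1 - hA.eigenvalues i ^ 2| ≤ 0 := by
      simpa [hA'] using abs_sub_sq_eigenvalues_le hA 1 i
    rw [abs_nonpos_iff, sub_eq_zero] at this
    exact sq_eq_one_iff.mp this.symm
  rw [posIndex_eq_card hA, hA.trace_eq_sum_eigenvalues, Fintype.card_subtype, Finset.card_filter,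
    Fintype.card_eq_sum_ones]
  push_cast
  rw [← Finset.sum_add_distrib, Finset.mul_sum]
  refine Finset.sum_congr rfl fun i _ ↦ ?_
  rcases eigenvalue_eq i with h | h <;> norm_num [h]

lemma re_inner_toEuclideanCLM_self (hA : A.IsHermitian) (x : EuclideanSpace ℂ n) :
    (⟪x, toEuclideanCLM (𝕜 := ℂ) A x⟫_ℂ).re =
      ∑ i, hA.eigenvalues i * ‖⟪hA.eigenvectorBasis i, x⟫_ℂ‖ ^ 2 := by
  set b := hA.eigenvectorBasis
  have apply_eigenvector (i : n) :
      toEuclideanCLM (𝕜 := ℂ) A (b i) = (hA.eigenvalues i : ℂ) • b i := by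
    ext j
    exact congrFun (hA.mulVec_eigenvectorBasis i) j
  have coefficient (i : n) :
      ⟪b i, toEuclideanCLM (𝕜 := ℂ) A x⟫_ℂ = hA.eigenvalues i * ⟪b i, x⟫_ℂ := by
    rw [← ContinuousLinearMap.adjoint_inner_left, ← ContinuousLinearMap.star_eq_adjoint,
      ← map_star, hA.isSelfAdjoint.star_eq, apply_eigenvector, inner_smul_left, Complex.conj_ofReal]
  rw [← b.sum_inner_mul_inner, Complex.re_sum]
  refine Finset.sum_congr rfl fun i _ ↦ ?_
  rw [coefficient, mul_left_comm, ← inner_conj_symm, Complex.conj_mul']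
  norm_cast

lemma finrank_le_posIndex (hA : A.IsHermitian) {c : ℝ}
    (hc : ∀ i, hA.eigenvalues i ≤ 0 → hA.eigenvalues i ≤ -c)
    (V : Submodule ℂ (EuclideanSpace ℂ n))
    (hV : ∀ x ∈ V, x ≠ 0 → -c * ‖x‖ ^ 2 < (⟪x, toEuclideanCLM (𝕜 := ℂ) A x⟫_ℂ).re) :
    Module.finrank ℂ V ≤ posIndex A := by
  let coords : EuclideanSpace ℂ n →ₗ[ℂ] {i // 0 < hA.eigenvalues i} → ℂ :=
    LinearMap.pi fun i ↦ innerₛₗ ℂ (hA.eigenvectorBasis i)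
  have injective : Function.Injective (coords.domRestrict V) := by
    rw [injective_iff_map_eq_zero]
    rintro ⟨x, hx⟩ hx0
    by_contra hne
    refine (hV x hx fun h ↦ hne (Subtype.ext h)).not_ge ?_
    rw [re_inner_toEuclideanCLM_self hA, ← hA.eigenvectorBasis.sum_sq_norm_inner_right,
      Finset.mul_sum]
    refine Finset.sum_le_sum fun i _ ↦ ?_
    rcases lt_or_ge 0 (hA.eigenvalues i) with hi | hi
    · have : ⟪hA.eigenvectorBasis i, x⟫_ℂ = 0 := congrFun hx0 ⟨i, hi⟩
      simp [this]
    · exact mul_le_mul_of_nonneg_right (hc i hi) (sq_nonneg _)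
  rw [posIndex_eq_card hA, ← Module.finrank_fintype_fun_eq_card ℂ]
  exact LinearMap.finrank_le_finrank_of_injective injective

lemma exists_finrank_eq_posIndex (hA : A.IsHermitian) {c : ℝ}
    (hc : ∀ i, 0 < hA.eigenvalues i → c ≤ hA.eigenvalues i) :
    ∃ V : Submodule ℂ (EuclideanSpace ℂ n), Module.finrank ℂ V = posIndex A ∧
      ∀ x ∈ V, c * ‖x‖ ^ 2 ≤ (⟪x, toEuclideanCLM (𝕜 := ℂ) A x⟫_ℂ).re := by
  let positive (i : {i // 0 < hA.eigenvalues i}) : EuclideanSpace ℂ n := hA.eigenvectorBasis i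
  refine ⟨Submodule.span ℂ (Set.range positive), ?_, fun x hx ↦ ?_⟩
  · rw [posIndex_eq_card hA]
    exact finrank_span_eq_card
      (hA.eigenvectorBasis.orthonormal.linearIndependent.comp _ Subtype.val_injective)
  rw [re_inner_toEuclideanCLM_self hA, ← hA.eigenvectorBasis.sum_sq_norm_inner_right,
    Finset.mul_sum]
  refine Finset.sum_le_sum fun i _ ↦ ?_
  by_cases hi : 0 < hA.eigenvalues i
  · exact mul_le_mul_of_nonneg_right (hc i hi) (sq_nonneg _)
  · have orthogonal : Submodule.span ℂ (Set.range positive) ≤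
        (innerₛₗ ℂ (hA.eigenvectorBasis i)).ker := by
      rw [Submodule.span_le]
      rintro _ ⟨j, rfl⟩
      exact hA.eigenvectorBasis.orthonormal.2 fun h ↦ hi (h ▸ j.2)
    have : ⟪hA.eigenvectorBasis i, x⟫_ℂ = 0 := orthogonal hx
    simp [this]

lemma posIndex_le_posIndex (hA : A.IsHermitian) (hA' : A'.IsHermitian) {c c' : ℝ}
    (hc : ∀ i, 0 < hA.eigenvalues i → c ≤ hA.eigenvalues i)
    (hc' : ∀ i, hA'.eigenvalues i ≤ 0 → hA'.eigenvalues i ≤ -c')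
    (hAA' : ‖A - A'‖ < c + c') : posIndex A ≤ posIndex A' := by
  obtain ⟨V, hV, hAV⟩ := exists_finrank_eq_posIndex hA hc
  rw [← hV]
  refine finrank_le_posIndex hA' hc' V fun x hx hx0 ↦ ?_
  have difference : (⟪x, toEuclideanCLM (𝕜 := ℂ) (A - A') x⟫_ℂ).re ≤ ‖A - A'‖ * ‖x‖ ^ 2 := by
    calc _ ≤ ‖x‖ * ‖toEuclideanCLM (𝕜 := ℂ) (A - A') x‖ := re_inner_le_norm (𝕜 := ℂ) _ _
      _ ≤ ‖x‖ * (‖A - A'‖ * ‖x‖) := by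
        gcongr
        exact ContinuousLinearMap.le_opNorm _ _
      _ = ‖A - A'‖ * ‖x‖ ^ 2 := by ring
  rw [map_sub, _root_.sub_apply, inner_sub_right, Complex.sub_re] at difference
  nlinarith [hAV x hx, mul_lt_mul_of_pos_right hAA' (pow_pos (norm_pos_iff.2 hx0) 2)]

lemma posIndex_eq_of_norm_sub_lt (hA : A.IsHermitian) (hA' : A'.IsHermitian) {c : ℝ}
    (hc : ∀ i, c ≤ |hA.eigenvalues i|) (hAA' : ‖A - A'‖ < c) : posIndex A = posIndex A' := by
  apply le_antisymm
  · exact posIndex_le_posIndex hA hA' (fun i hi ↦ abs_of_pos hi ▸ hc i) (c' := 0) (by simp)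
      (by rwa [add_zero])
  · exact posIndex_le_posIndex hA' hA (c := 0) (fun i hi ↦ hi.le)
      (fun i hi ↦ le_neg_of_le_neg (abs_of_nonpos hi ▸ hc i)) (by rwa [zero_add, norm_sub_rev])

end PosIndex

/-! ### Homotopy invariance -/

section Homotopy

open TrigPoly
open scoped unitInterval Matrix.Norms.L2Operator

variable {J κ : Type*} [Fintype J] [DecidableEq J] [Fintype κ] [DecidableEq κ]
  {F₀ F₁ G₀ G₁ : TrigPoly (κ ⊕ κ) (Matrix J J ℂ)}

lemma norm_dirac_lineMap_sub_le (M : ℕ) [NeZero M] (s t : ℝ) :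
    ‖dirac M (AffineMap.lineMap F₀ F₁ s) (AffineMap.lineMap G₀ G₁ s) -
      dirac M (AffineMap.lineMap F₀ F₁ t) (AffineMap.lineMap G₀ G₁ t)‖ ≤
        |s - t| * (sumNorm (F₁ - F₀) + sumNorm (G₁ - G₀)) := by
  have lineMap_sub_lineMap (a b : TrigPoly (κ ⊕ κ) (Matrix J J ℂ)) :
      AffineMap.lineMap a b s - AffineMap.lineMap a b t = (s - t) • (b - a) := by
    simp only [AffineMap.lineMap_apply_module]
    module
  rw [← dirac_sub, lineMap_sub_lineMap, lineMap_sub_lineMap, dirac_smul, norm_smul,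
    Real.norm_eq_abs]
  exact mul_le_mul_of_nonneg_left (norm_dirac_le M _ _) (abs_nonneg _)

-- The index, as a germ in `M → ∞`, is a locally constant function of the homotopy parameter.
lemma eventually_posIndex_dirac_eq
    (h : ∀ t ∈ I, IsGapped (AffineMap.lineMap F₀ F₁ t) (AffineMap.lineMap G₀ G₁ t)) :
    ∀ᶠ M : ℕ+ in atTop, posIndex (dirac M F₀ G₀) = posIndex (dirac M F₁ G₁) := by
  let index (t : I) : Germ (atTop : Filter ℕ+) ℕ := Germ.ofFun fun M : ℕ+ ↦
    posIndex (dirac M (AffineMap.lineMap F₀ F₁ (t : ℝ)) (AffineMap.lineMap G₀ G₁ (t : ℝ)))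
  have locallyConstant : IsLocallyConstant index := by
    refine (IsLocallyConstant.iff_eventually_eq _).mpr fun t ↦ ?_
    obtain ⟨c, hc, gap⟩ := (h t t.2).exists_eventually_le_abs_eigenvalues
    have small : ∀ᶠ s : I in 𝓝 t,
        |(t : ℝ) - s| * (sumNorm (F₁ - F₀) + sumNorm (G₁ - G₀)) < c := by
      refine ContinuousAt.eventually_lt (by fun_prop) continuousAt_const ?_
      simpa using hc
    filter_upwards [small] with s hs
    refine Germ.coe_eq.mpr ?_
    filter_upwards [gap] with M hM
    exact (posIndex_eq_of_norm_sub_lt ((h t t.2).isHermitian_dirac M)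
      ((h s s.2).isHermitian_dirac M) hM ((norm_dirac_lineMap_sub_le M _ _).trans_lt hs)).symm
  have endpoints := Germ.coe_eq.mp (locallyConstant.apply_eq_of_preconnectedSpace 0 1)
  simp only [Set.Icc.coe_zero, Set.Icc.coe_one, AffineMap.lineMap_apply_zero,
    AffineMap.lineMap_apply_one] at endpoints
  exact endpoints

end Homotopy

/-! ### Dirac operators with decoupled symbols -/

section TensorDirac

open AddMonoidAlgebra TrigPoly
open scoped Kronecker unitInterval

variable {J R κ : Type*} [Fintype J] [DecidableEq J] [Fintype R] [DecidableEq R]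

lemma commute_mapCoeff_kroneckerOne_oneKronecker {ι : Type*} (F : TrigPoly ι (Matrix J J ℂ))
    (G : TrigPoly ι (Matrix R R ℂ)) :
    Commute (mapCoeff (kroneckerOne J R) F) (mapCoeff (oneKronecker J R) G) := by
  induction F using AddMonoidAlgebra.induction_linear with
  | zero => simp
  | add F F' hF hF' => simpa only [map_add] using hF.add_left hF'
  | single m C =>
    induction G using AddMonoidAlgebra.induction_linear with
    | zero => simp
    | add G G' hG hG' => simpa only [map_add] using hG.add_right hG'
    | single m' C' =>
      simp only [mapCoeff_single, Commute, SemiconjBy, single_mul_single, add_comm m',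
        kroneckerOne_apply, oneKronecker_apply, ← mul_kronecker_mul, one_mul, mul_one]

lemma isGapped_mapCoeff_kroneckerOne_oneKronecker {ι : Type*} [Fintype ι]
    {F : TrigPoly ι (Matrix J J ℂ)} {G : TrigPoly ι (Matrix R R ℂ)}
    (hF : HasHermitianCoeff F) (hG : HasHermitianCoeff G) (hF' : reflect F = -F)
    (h : ∀ z, IsUnit (eval z F) ∨ IsUnit (eval z G)) :
    IsGapped (mapCoeff (kroneckerOne J R) F) (mapCoeff (oneKronecker J R) G) where
  hasHermitianCoeff_left := hF.mapCoeff _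
  hasHermitianCoeff_right := hG.mapCoeff _
  reflect_left := by rw [reflect_mapCoeff, hF', map_neg]
  commute := commute_mapCoeff_kroneckerOne_oneKronecker F G
  isUnit_eval z := by
    simp only [eval_mapCoeff]
    exact (h z).imp (·.map _) (·.map _)

variable [Fintype κ] [DecidableEq κ]

/-- The lattice Dirac operator with kinetic symbol `i (F ⊗ 1)` and mass symbol `1 ⊗ G`. -/
def tensorDirac (M : ℕ) [NeZero M] (F : TrigPoly (κ ⊕ κ) (Matrix J J ℂ))
    (G : TrigPoly (κ ⊕ κ) (Matrix R R ℂ)) :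
    Matrix ((J × R) × (κ → ZMod M)) ((J × R) × (κ → ZMod M)) ℂ :=
  dirac M (mapCoeff (kroneckerOne J R) F) (mapCoeff (oneKronecker J R) G)

lemma eventually_posIndex_tensorDirac_eq {F₀ F₁ : TrigPoly (κ ⊕ κ) (Matrix J J ℂ)}
    {G₀ G₁ : TrigPoly (κ ⊕ κ) (Matrix R R ℂ)} (hF₀ : HasHermitianCoeff F₀)
    (hF₁ : HasHermitianCoeff F₁) (hG₀ : HasHermitianCoeff G₀) (hG₁ : HasHermitianCoeff G₁)
    (reflect_F₀ : reflect F₀ = -F₀) (reflect_F₁ : reflect F₁ = -F₁)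
    (h : ∀ t ∈ I, ∀ z, IsUnit (AffineMap.lineMap (eval z F₀) (eval z F₁) t) ∨
      IsUnit (AffineMap.lineMap (eval z G₀) (eval z G₁) t)) :
    ∀ᶠ M : ℕ+ in atTop, posIndex (tensorDirac M F₀ G₀) = posIndex (tensorDirac M F₁ G₁) := by
  refine eventually_posIndex_dirac_eq fun t ht ↦ ?_
  rw [← mapCoeff_lineMap, ← mapCoeff_lineMap]
  refine isGapped_mapCoeff_kroneckerOne_oneKronecker (hF₀.lineMap hF₁ t) (hG₀.lineMap hG₁ t) ?_
    fun z ↦ ?_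
  · simp only [AffineMap.lineMap_apply_module, map_add, AlgHom.map_smul_of_tower, reflect_F₀,
      reflect_F₁, smul_neg, neg_add]
  · rw [eval_lineMap, eval_lineMap]
    exact h t ht z

section Amplification

variable (B : Type*) [Fintype B] [DecidableEq B] (M : ℕ) [NeZero M]

variable (J R κ) in
/-- The embedding `A ↦ 1 ⊗ A` that adds the degrees of freedom `B` to the mass symbol. -/
def amplify : Matrix ((J × R) × (κ → ZMod M)) ((J × R) × (κ → ZMod M)) ℂ →ₐ[ℂ]
    Matrix ((J × (B × R)) × (κ → ZMod M)) ((J × (B × R)) × (κ → ZMod M)) ℂ :=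
  let e : B × ((J × R) × (κ → ZMod M)) ≃ (J × (B × R)) × (κ → ZMod M) :=
    (Equiv.prodAssoc ..).symm.trans <| Equiv.prodCongrLeft fun _ ↦
      (Equiv.prodAssoc ..).symm.trans <| ((Equiv.prodComm B J).prodCongr (.refl R)).trans <|
        Equiv.prodAssoc ..
  (reindexAlgEquiv ℂ ℂ e).toAlgHom.comp (oneKronecker B _).toAlgHom

lemma amplify_apply (A : Matrix ((J × R) × (κ → ZMod M)) ((J × R) × (κ → ZMod M)) ℂ)
    (j j' : J) (b b' : B) (r r' : R) (x x' : κ → ZMod M) :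
    amplify J R κ B M A ((j, b, r), x) ((j', b', r'), x') =
      if b = b' then A ((j, r), x) ((j', r'), x') else 0 := by
  simp [amplify, oneKronecker_apply, one_apply]

lemma posIndex_amplify (A : Matrix ((J × R) × (κ → ZMod M)) ((J × R) × (κ → ZMod M)) ℂ) :
    posIndex (amplify J R κ B M A) = Fintype.card B * posIndex A :=
  calc posIndex (amplify J R κ B M A)
      = posIndex (oneKronecker B _ A) := posIndex_reindex _ (oneKronecker B _ A)
    _ = Fintype.card B * posIndex A := by rw [oneKronecker_apply, posIndex_one_kronecker]

lemma amplify_tupleParity : amplify J R κ B M (tupleParity (J × R) κ M) =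
    tupleParity (J × (B × R)) κ M := by
  ext ⟨⟨j, b, r⟩, x⟩ ⟨⟨j', b', r'⟩, x'⟩
  simp only [amplify_apply, tupleParity, kroneckerMap_apply, one_apply, Prod.mk.injEq]
  grind

lemma amplify_quantize_kroneckerOne (F : TrigPoly (κ ⊕ κ) (Matrix J J ℂ)) :
    amplify J R κ B M (quantize M (mapCoeff (kroneckerOne J R) F)) =
      quantize M (mapCoeff (kroneckerOne J (B × R)) F) := by
  induction F using AddMonoidAlgebra.induction_linear with
  | zero => simp
  | add a b ha hb => simp only [map_add, ha, hb]
  | single m c =>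
    simp only [mapCoeff_single, quantize_single]
    ext ⟨⟨j, b, r⟩, x⟩ ⟨⟨j', b', r'⟩, x'⟩
    simp only [amplify_apply, kroneckerOne_apply, kroneckerMap_apply, one_apply, Prod.mk.injEq]
    grind

lemma amplify_quantize_oneKronecker (G : TrigPoly (κ ⊕ κ) (Matrix R R ℂ)) :
    amplify J R κ B M (quantize M (mapCoeff (oneKronecker J R) G)) =
      quantize M (mapCoeff (oneKronecker J (B × R)) (mapCoeff (oneKronecker B R) G)) := by
  induction G using AddMonoidAlgebra.induction_linear with
  | zero => simp
  | add a b ha hb => simp only [map_add, ha, hb]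
  | single m c =>
    simp only [mapCoeff_single, quantize_single]
    ext ⟨⟨j, b, r⟩, x⟩ ⟨⟨j', b', r'⟩, x'⟩
    simp [amplify_apply, oneKronecker_apply, one_apply]

lemma posIndex_tensorDirac_mapCoeff_oneKronecker (F : TrigPoly (κ ⊕ κ) (Matrix J J ℂ))
    (G : TrigPoly (κ ⊕ κ) (Matrix R R ℂ)) :
    posIndex (tensorDirac M F (mapCoeff (oneKronecker B R) G)) =
      Fintype.card B * posIndex (tensorDirac M F G) := by
  rw [← posIndex_amplify, tensorDirac, tensorDirac, dirac, dirac, map_add, map_smul, map_mul,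
    amplify_tupleParity, amplify_quantize_kroneckerOne, amplify_quantize_oneKronecker]

end Amplification

end TensorDirac

/-! ### Interpolation at the corners of the torus -/

section Corners

open AddMonoidAlgebra TrigPoly

variable {ι : Type*} [DecidableEq ι]

/-- The sign `e^{2πi θᵢ}` at the corner `θ` of the torus given by `p`. -/
def cornerSign (p : Finset ι) (i : ι) : ℝ := if i ∈ p then -1 else 1

lemma cornerSign_mul_self (p : Finset ι) (i : ι) : cornerSign p i * cornerSign p i = 1 := by
  rw [cornerSign]
  split_ifs <;> norm_num

/-- The corner of the torus `(ℝ/ℤ)^ι` with coordinates `1/2` on `p` and `0` elsewhere. -/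
def corner (p : Finset ι) : UnitAddTorus ι :=
  fun i ↦ if i ∈ p then ((1 / 2 : ℝ) : UnitAddCircle) else 0

/-- The Walsh function with frequency `b`. -/
def walsh (b p : Finset ι) : ℝ := ∏ i ∈ b, cornerSign p i

lemma fourier_one_corner (p : Finset ι) (i : ι) :
    fourier 1 (corner p i) = (cornerSign p i : ℂ) := by
  have fourier_half : fourier 1 ((1 / 2 : ℝ) : UnitAddCircle) = (-1 : ℂ) := by
    rw [fourier_coe_apply, ← Complex.exp_pi_mul_I]
    push_cast
    ring_nf
  rw [corner, cornerSign]
  split_ifs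
  · rw [fourier_half]
    simp
  · simp

lemma exists_eq_corner [Finite ι] {z : UnitAddTorus ι} (h : ∀ i, (fourier 1 (z i)).im = 0) :
    ∃ p, z = corner p := by
  cases nonempty_fintype ι
  refine ⟨Finset.univ.filter fun i ↦ (fourier 1 (z i)).re = -1, funext fun i ↦ ?_⟩
  have sign : (fourier 1 (z i)).re = 1 ∨ (fourier 1 (z i)).re = -1 := by
    have norm_eq_one : Complex.normSq (fourier 1 (z i)) = 1 := by
      rw [fourier_one, Circle.normSq_coe]
    rw [Complex.normSq_apply, h i, mul_zero, add_zero] at norm_eq_one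
    exact mul_self_eq_one_iff.mp norm_eq_one
  have fourier_eq : fourier 1 (z i) =
      fourier 1 (corner (Finset.univ.filter fun i ↦ (fourier 1 (z i)).re = -1) i) := by
    rw [fourier_one_corner, cornerSign]
    refine Complex.ext ?_ (by simpa using h i)
    rcases sign with hi | hi <;> norm_num [-fourier_apply, hi]
  rw [fourier_one, fourier_one] at fourier_eq
  exact AddCircle.injective_toCircle one_ne_zero (Subtype.coe_injective fourier_eq)

lemma walsh_empty_right (b : Finset ι) : walsh b ∅ = 1 := by
  simp [walsh, cornerSign]

lemma walsh_mul_self (b p : Finset ι) : walsh b p * walsh b p = 1 := by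
  simp [walsh, ← Finset.prod_mul_distrib, cornerSign_mul_self]

lemma walsh_symmDiff_singleton {p : Finset ι} {i : ι} (hi : i ∈ p) (b : Finset ι) :
    walsh (symmDiff b {i}) p = -walsh b p := by
  have hsign : cornerSign p i = -1 := if_pos hi
  by_cases hb : i ∈ b
  · have : symmDiff b {i} = b.erase i := by grind [Finset.mem_symmDiff]
    rw [this, walsh, walsh, ← Finset.mul_prod_erase b _ hb, hsign, neg_one_mul, neg_neg]
  · have : symmDiff b {i} = insert i b := by grind [Finset.mem_symmDiff]
    rw [this, walsh, walsh, Finset.prod_insert hb, hsign, neg_one_mul]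

variable [Fintype ι]

lemma sum_walsh_mul_walsh (p q : Finset ι) :
    ∑ b, walsh b p * walsh b q = if p = q then 2 ^ Fintype.card ι else 0 := by
  have sum_eq_prod :
      ∑ b, walsh b p * walsh b q = ∏ i, (1 + cornerSign p i * cornerSign q i) := by
    rw [Finset.prod_one_add, Finset.powerset_univ]
    simp only [walsh, Finset.prod_mul_distrib]
  rw [sum_eq_prod]
  split_ifs with hpq
  · norm_num [hpq, cornerSign_mul_self]
  · obtain ⟨i, hi⟩ : ∃ i, ¬(i ∈ p ↔ i ∈ q) := by simpa [Finset.ext_iff] using hpq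
    refine Finset.prod_eq_zero (Finset.mem_univ i) ?_
    rw [cornerSign, cornerSign]
    split_ifs <;> first | tauto | norm_num

/-- The frequency `∑ i ∈ b, eᵢ`. -/
def indicatorFreq (b : Finset ι) : ι → ℤ := fun i ↦ if i ∈ b then 1 else 0

lemma mFourier_indicatorFreq_corner (b p : Finset ι) :
    mFourier (indicatorFreq b) (corner p) = (walsh b p : ℂ) := by
  simp [mFourier, indicatorFreq, apply_ite, ite_apply, walsh, ← fourier_one_corner]

variable {R : Type*} [Fintype R] [DecidableEq R]

/-- A trigonometric polynomial with prescribed values at the corners of the torus. -/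
def interpolate (μ : Finset ι → Matrix R R ℂ) : TrigPoly ι (Matrix R R ℂ) :=
  ∑ b, single (indicatorFreq b) ((2 ^ Fintype.card ι : ℝ)⁻¹ • ∑ p, walsh b p • μ p)

lemma eval_corner_interpolate (μ : Finset ι → Matrix R R ℂ) (p : Finset ι) :
    eval (corner p) (interpolate μ) = μ p := by
  have value : eval (corner p) (interpolate μ) =
      ∑ q, ((2 ^ Fintype.card ι : ℝ)⁻¹ * ∑ b, walsh b p * walsh b q) • μ q := by
    simp only [interpolate, map_sum, eval_single, mFourier_indicatorFreq_corner, Complex.coe_smul,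
      Finset.smul_sum, smul_smul, Finset.mul_sum, Finset.sum_smul]
    rw [Finset.sum_comm]
    simp only [mul_left_comm]
  simp [value, sum_walsh_mul_walsh]

lemma hasHermitianCoeff_interpolate {μ : Finset ι → Matrix R R ℂ} (hμ : ∀ p, (μ p).IsHermitian) :
    HasHermitianCoeff (interpolate μ) := by
  refine .sum fun b _ ↦ .single (IsHermitian.smul ?_ (.all _)) _
  exact isSelfAdjoint_sum _ fun p _ ↦ (hμ p).smul (.all _)

end Corners

/-! ### Pencils of Hermitian matrices -/

section Pencil

open TrigPoly

variable {ι J : Type*} [Fintype ι] [Fintype J] [DecidableEq J]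

/-- A tuple of Hermitian matrices whose nontrivial real combinations are all invertible. -/
structure IsNonsingularPencil (A : ι → Matrix J J ℂ) : Prop where
  isHermitian : ∀ l, (A l).IsHermitian
  isUnit_sum : ∀ c : ι → ℝ, c ≠ 0 → IsUnit (∑ l, c l • A l)

variable [DecidableEq ι]

/-- The symbol `-2i ∑ₗ sin(2πθₗ) Aₗ`. -/
def kinetic (A : ι → Matrix J J ℂ) : TrigPoly ι (Matrix J J ℂ) :=
  ∑ l, (AddMonoidAlgebra.single (-Pi.single l 1 : ι → ℤ) (A l) -
    AddMonoidAlgebra.single (Pi.single l 1 : ι → ℤ) (A l))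

lemma reflect_kinetic (A : ι → Matrix J J ℂ) : reflect (kinetic A) = -kinetic A := by
  simp only [kinetic, map_sum, map_sub, reflect_single, neg_neg, ← Finset.sum_neg_distrib, neg_sub]

lemma eval_kinetic (A : ι → Matrix J J ℂ) (z : UnitAddTorus ι) :
    eval z (kinetic A) = (-2 * Complex.I) • ∑ l, (fourier 1 (z l)).im • A l := by
  simp only [kinetic, map_sum, map_sub, eval_single, mFourier_neg, mFourier_single, ← sub_smul,
    Finset.smul_sum, ← Complex.coe_smul, smul_smul]
  refine Finset.sum_congr rfl fun l _ ↦ ?_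
  congr 1
  rw [← neg_sub, Complex.sub_conj]
  push_cast
  ring

namespace IsNonsingularPencil

variable {A : ι → Matrix J J ℂ}

lemma hasHermitianCoeff_kinetic (hA : IsNonsingularPencil A) : HasHermitianCoeff (kinetic A) :=
  .sum fun l _ ↦ (HasHermitianCoeff.single (hA.isHermitian l) _).sub (.single (hA.isHermitian l) _)

lemma isUnit_eval_kinetic_or_eq_corner (hA : IsNonsingularPencil A) (z : UnitAddTorus ι) :
    IsUnit (eval z (kinetic A)) ∨ ∃ p, z = corner p := by
  by_cases hz : ∀ l, (fourier 1 (z l)).im = 0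
  · exact .inr (exists_eq_corner hz)
  · left
    have scalar_ne_zero : -2 * Complex.I ≠ 0 := by simp
    rw [eval_kinetic]
    exact (hA.isUnit_sum _ fun h ↦ hz (congrFun h)).smul (Units.mk0 _ scalar_ne_zero)

end IsNonsingularPencil

end Pencil

/-! ### Clifford families -/

section Clifford

open scoped Kronecker

section Kronecker

variable {m n : Type*} {A : Matrix m m ℂ} {B : Matrix n n ℂ}

lemma isHermitian_kronecker (hA : A.IsHermitian) (hB : B.IsHermitian) : (A ⊗ₖ B).IsHermitian := by
  rw [IsHermitian, conjTranspose_kronecker, hA.eq, hB.eq]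

lemma neg_kronecker : (-A) ⊗ₖ B = -(A ⊗ₖ B) := by
  ext
  simp

lemma kronecker_neg : A ⊗ₖ (-B) = -(A ⊗ₖ B) := by
  ext
  simp

end Kronecker

lemma isUnit_lineMap_of_mul_eq_neg_mul {A : Type*} [Ring A] [Algebra ℝ A] {X Y : A}
    (hX : X * X = 1) (hY : Y * Y = 1) (hXY : X * Y = -(Y * X)) (t : ℝ) :
    IsUnit (AffineMap.lineMap X Y t) := by
  have square : (AffineMap.lineMap X Y t) ^ 2 = ((1 - t) ^ 2 + t ^ 2) • (1 : A) := by
    simp only [AffineMap.lineMap_apply_module, sq, add_mul, mul_add, smul_mul_smul_comm, hX, hY,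
      hXY]
    module
  have scalar_ne_zero : (1 - t) ^ 2 + t ^ 2 ≠ 0 := by nlinarith [sq_nonneg (2 * t - 1)]
  rw [← isUnit_pow_iff two_ne_zero, square]
  exact isUnit_one.smul (Units.mk0 _ scalar_ne_zero)

variable {I n : Type*} [Fintype n] [DecidableEq n]

/-- A family of pairwise anticommuting Hermitian involutions: a Hermitian representation of the
generators of a Clifford algebra. -/
structure IsClifford (γ : I → Matrix n n ℂ) : Prop where
  isHermitian : ∀ i, (γ i).IsHermitian
  mul_self : ∀ i, γ i * γ i = 1
  mul_eq_neg_mul : ∀ i j, i ≠ j → γ i * γ j = -(γ j * γ i)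

/-- The Pauli matrices. -/
def pauli : Fin 3 → Matrix (Fin 2) (Fin 2) ℂ :=
  ![!![0, 1; 1, 0], !![0, -Complex.I; Complex.I, 0], !![1, 0; 0, -1]]

lemma isClifford_pauli : IsClifford pauli where
  isHermitian i := by
    ext a b
    fin_cases i <;> fin_cases a <;> fin_cases b <;> simp [pauli]
  mul_self i := by
    ext a b
    fin_cases i <;> fin_cases a <;> fin_cases b <;> simp [pauli]
  mul_eq_neg_mul i j hij := by
    ext a b
    fin_cases i <;> fin_cases j <;> first | exact absurd rfl hij |
      fin_cases a <;> fin_cases b <;> simp [pauli]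

namespace IsClifford

variable {γ : I → Matrix n n ℂ}

lemma comp (h : IsClifford γ) {I' : Type*} (e : I' ↪ I) : IsClifford (γ ∘ e) where
  isHermitian i := h.isHermitian (e i)
  mul_self i := h.mul_self (e i)
  mul_eq_neg_mul i j hij := h.mul_eq_neg_mul (e i) (e j) (e.injective.ne hij)

lemma reindex (h : IsClifford γ) {n' : Type*} [Fintype n'] [DecidableEq n'] (e : n ≃ n') :
    IsClifford fun i ↦ Matrix.reindex e e (γ i) where
  isHermitian i := (h.isHermitian i).reindex e
  mul_self i := by
    rw [← coe_reindexAlgEquiv ℂ ℂ, ← map_mul, h.mul_self, map_one]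
  mul_eq_neg_mul i j hij := by
    rw [← coe_reindexAlgEquiv ℂ ℂ, ← map_mul, ← map_mul, h.mul_eq_neg_mul i j hij, map_neg]

lemma sum_kronecker_pauli (h : IsClifford γ) : IsClifford
    (Sum.elim (fun i ↦ γ i ⊗ₖ pauli 0) fun j : Fin 2 ↦ (1 : Matrix n n ℂ) ⊗ₖ pauli j.succ) where
  isHermitian := by
    rintro (i | j)
    · exact isHermitian_kronecker (h.isHermitian i) (isClifford_pauli.isHermitian 0)
    · exact isHermitian_kronecker isHermitian_one (isClifford_pauli.isHermitian j.succ)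
  mul_self := by
    rintro (i | j) <;>
      simp [← mul_kronecker_mul, h.mul_self, isClifford_pauli.mul_self]
  mul_eq_neg_mul := by
    rintro (i | i) (j | j) hij
    · simp [← mul_kronecker_mul, h.mul_eq_neg_mul i j (by simpa using hij), neg_kronecker]
    · simp [← mul_kronecker_mul, isClifford_pauli.mul_eq_neg_mul 0 j.succ (Fin.succ_ne_zero j).symm,
        kronecker_neg]
    · simp [← mul_kronecker_mul, isClifford_pauli.mul_eq_neg_mul i.succ 0 (Fin.succ_ne_zero i),
        kronecker_neg]
    · simp [← mul_kronecker_mul, isClifford_pauli.mul_eq_neg_mul i.succ j.succ (by simpa using hij),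
        kronecker_neg]

lemma sum_smul_sq [Fintype I] (h : IsClifford γ) (v : EuclideanSpace ℝ I) :
    (∑ i, v i • γ i) ^ 2 = ‖v‖ ^ 2 • (1 : Matrix n n ℂ) := by
  classical
  have anticommutator (i j : I) : γ i * γ j + γ j * γ i = if i = j then (2 : ℝ) • 1 else 0 := by
    split_ifs with hij
    · rw [hij, h.mul_self, two_smul]
    · rw [h.mul_eq_neg_mul i j hij, neg_add_cancel]
  have expand : (∑ i, v i • γ i) ^ 2 = ∑ i, ∑ j, (v i * v j) • (γ i * γ j) := by
    simp only [sq, Finset.sum_mul_sum, smul_mul_smul_comm]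
  have expand_swap : (∑ i, v i • γ i) ^ 2 = ∑ i, ∑ j, (v i * v j) • (γ j * γ i) := by
    rw [expand, Finset.sum_comm]
    simp only [mul_comm]
  refine smul_right_injective _ (two_ne_zero (α := ℝ)) ?_
  calc (2 : ℝ) • (∑ i, v i • γ i) ^ 2
      = ∑ i, ∑ j, (v i * v j) • (γ i * γ j + γ j * γ i) := by
        simp only [two_smul, smul_add, Finset.sum_add_distrib, ← expand, ← expand_swap]
    _ = (2 : ℝ) • ‖v‖ ^ 2 • (1 : Matrix n n ℂ) := by
        simp only [anticommutator, smul_ite, smul_zero, Finset.sum_ite_eq, Finset.mem_univ, if_true,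
          ← pow_two, ← Finset.sum_smul, EuclideanSpace.real_norm_sq_eq, smul_comm (2 : ℝ)]

lemma isHermitian_sum_smul [Fintype I] (h : IsClifford γ) (v : I → ℝ) :
    (∑ i, v i • γ i).IsHermitian :=
  isSelfAdjoint_sum _ fun i _ ↦ (h.isHermitian i).smul (.all _)

end IsClifford

lemma exists_isClifford_of_two_pow_dvd {b N : ℕ} (h : 2 ^ b ∣ N) :
    ∃ γ : Fin (2 * b + 1) → Matrix (Fin N) (Fin N) ℂ, IsClifford γ := by
  obtain ⟨q, rfl⟩ := h
  induction b with
  | zero =>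
    exact ⟨fun _ ↦ 1, fun _ ↦ isHermitian_one, fun _ ↦ one_mul 1,
      fun i j hij ↦ absurd (Subsingleton.elim (α := Fin 1) i j) hij⟩
  | succ b ih =>
    obtain ⟨γ, hγ⟩ := ih
    let e : Fin (2 * (b + 1) + 1) ≃ Fin (2 * b + 1) ⊕ Fin 2 :=
      Fintype.equivOfCardEq (by simp; ring)
    let e' : Fin (2 ^ b * q) × Fin 2 ≃ Fin (2 ^ (b + 1) * q) :=
      Fintype.equivOfCardEq (by simp; ring)
    exact ⟨_, (hγ.sum_kronecker_pauli.reindex e').comp e.toEmbedding⟩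

end Clifford

/-! ### Mass symbols -/

section Mass

open TrigPoly
open scoped Kronecker

lemma reflect_mul_self_of_completeOrthogonalIdempotents {ι B R : Type*} [Fintype B] [Ring R]
    [Algebra ℂ R] {C : B → R} (hC : CompleteOrthogonalIdempotents C) (m : B → ι → ℤ) :
    reflect (∑ b, AddMonoidAlgebra.single (m b) (C b)) *
      ∑ b, AddMonoidAlgebra.single (m b) (C b) = 1 := by
  classical
  simp only [map_sum, reflect_single, Finset.sum_mul_sum, AddMonoidAlgebra.single_mul_single,
    hC.mul_eq]
  have diagonal_term (b b' : B) : AddMonoidAlgebra.single (-m b + m b') (if b = b' then C b else 0)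
      = if b = b' then AddMonoidAlgebra.single (0 : ι → ℤ) (C b) else 0 := by
    split_ifs with h
    · rw [h, neg_add_cancel]
    · exact AddMonoidAlgebra.single_zero _
  simp only [diagonal_term, Finset.sum_ite_eq, Finset.mem_univ, if_true]
  rw [AddMonoidAlgebra.one_def, ← hC.complete]
  exact (map_sum (AddMonoidAlgebra.singleAddHom (0 : ι → ℤ)) C _).symm

variable {ι : Type*}

/-- Values at the corners of a mass symbol that acts only on the second factor of
`Finset ι × Fin 2`. -/
def reducedMassValue (p : Finset ι) : Matrix (Fin 2) (Fin 2) ℂ := if p.Nonempty then pauli 0 else 1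

lemma isHermitian_reducedMassValue (p : Finset ι) : (reducedMassValue p).IsHermitian := by
  rw [reducedMassValue]
  split_ifs
  · exact isClifford_pauli.isHermitian 0
  · exact isHermitian_one

variable [DecidableEq ι]

/-- The permutation matrix of `b ↦ b ∆ {i}` on the subsets of `ι`. -/
def toggle (i : ι) : Matrix (Finset ι) (Finset ι) ℂ :=
  (symmDiff_left_involutive ({i} : Finset ι)).toPerm.permMatrix ℂ

lemma isHermitian_toggle (i : ι) : (toggle i).IsHermitian := by
  rw [IsHermitian, toggle, conjTranspose_permMatrix]
  rfl

/-- The values at the corners of a mass symbol that links `initialMass` with `reducedMassValue`. -/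
def linkingMassValue (p : Finset ι) : Matrix (Finset ι × Fin 2) (Finset ι × Fin 2) ℂ :=
  if h : p.Nonempty then toggle h.choose ⊗ₖ pauli 2 else 1

lemma isHermitian_linkingMassValue (p : Finset ι) : (linkingMassValue p).IsHermitian := by
  rw [linkingMassValue]
  split_ifs
  · exact isHermitian_kronecker (isHermitian_toggle _) (isClifford_pauli.isHermitian 2)
  · exact isHermitian_one

variable [Fintype ι]

lemma toggle_mul_toggle (i : ι) : toggle i * toggle i = 1 := by
  rw [toggle, ← permMatrix_mul, ← permMatrix_one]
  congr 1
  ext1 b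
  exact symmDiff_left_involutive {i} b

lemma diagonal_walsh_mul_toggle {p : Finset ι} {i : ι} (hi : i ∈ p) :
    diagonal (fun b ↦ (walsh b p : ℂ)) * toggle i =
      -(toggle i * diagonal fun b ↦ (walsh b p : ℂ)) := by
  ext b b'
  rw [diagonal_mul, neg_apply, mul_diagonal, toggle, Equiv.Perm.permMatrix, PEquiv.toMatrix_apply]
  by_cases h : symmDiff b {i} = b'
  · simp [← h, walsh_symmDiff_singleton hi]
  · simp [h]

/-- The coefficients of `initialMass`: the projections onto the basis vectors indexed by subsets. -/
def subsetProjection (b : Finset ι) : Matrix (Finset ι × Fin 2) (Finset ι × Fin 2) ℂ :=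
  kroneckerOne _ _ (diagonal (Pi.single b 1))

lemma completeOrthogonalIdempotents_subsetProjection :
    CompleteOrthogonalIdempotents (subsetProjection (ι := ι)) :=
  ((CompleteOrthogonalIdempotents.single fun _ : Finset ι ↦ ℂ).map
    (diagonalRingHom (Finset ι) ℂ)).map (kroneckerOne (Finset ι) (Fin 2)).toAlgHom.toRingHom

lemma isHermitian_subsetProjection (b : Finset ι) : (subsetProjection b).IsHermitian := by
  refine isHermitian_kronecker (isHermitian_diagonal_of_self_adjoint _ ?_) isHermitian_one
  ext
  simp [Pi.single_apply, apply_ite]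

variable (ι) in
/-- A mass symbol that is invertible on the whole torus. -/
def initialMass : TrigPoly ι (Matrix (Finset ι × Fin 2) (Finset ι × Fin 2) ℂ) :=
  ∑ b, AddMonoidAlgebra.single (indicatorFreq b) (subsetProjection b)

lemma hasHermitianCoeff_initialMass : HasHermitianCoeff (initialMass ι) :=
  .sum fun b _ ↦ .single (isHermitian_subsetProjection b) _

lemma isUnit_eval_initialMass (z : UnitAddTorus ι) : IsUnit (eval z (initialMass ι)) := by
  refine .of_mul_eq_one_right (eval z (reflect (initialMass ι))) ?_
  rw [← map_mul, initialMass, reflect_mul_self_of_completeOrthogonalIdempotents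
    completeOrthogonalIdempotents_subsetProjection, map_one]

lemma eval_corner_initialMass (p : Finset ι) :
    eval (corner p) (initialMass ι) = diagonal (fun b ↦ (walsh b p : ℂ)) ⊗ₖ 1 := by
  have diagonal_eq_sum : diagonal (fun b ↦ (walsh b p : ℂ)) =
      ∑ b, (walsh b p : ℂ) • diagonal (Pi.single b (1 : ℂ)) := by
    ext c c'
    by_cases h : c = c' <;> simp [Matrix.sum_apply, Pi.single_apply, h]
  rw [diagonal_eq_sum, ← kroneckerOne_apply]
  simp only [initialMass, subsetProjection, map_sum, eval_single, mFourier_indicatorFreq_corner,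
    map_smul]

lemma isUnit_lineMap_initialMass_linkingMassValue (p : Finset ι) (t : ℝ) :
    IsUnit (AffineMap.lineMap (eval (corner p) (initialMass ι)) (linkingMassValue p) t) := by
  rw [eval_corner_initialMass, linkingMassValue]
  split_ifs with hp
  · refine isUnit_lineMap_of_mul_eq_neg_mul ?_ ?_ ?_ t
    · rw [← mul_kronecker_mul, diagonal_mul_diagonal]
      simp [← Complex.ofReal_mul, walsh_mul_self]
    · rw [← mul_kronecker_mul, toggle_mul_toggle, isClifford_pauli.mul_self, one_kronecker_one]
    · rw [← mul_kronecker_mul, ← mul_kronecker_mul, diagonal_walsh_mul_toggle hp.choose_spec,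
        one_mul, mul_one, neg_kronecker]
  · simp [Finset.not_nonempty_iff_eq_empty.mp hp, walsh_empty_right]

lemma isUnit_lineMap_linkingMassValue_reducedMassValue (p : Finset ι) (t : ℝ) :
    IsUnit (AffineMap.lineMap (linkingMassValue p)
      (oneKronecker (Finset ι) (Fin 2) (reducedMassValue p)) t) := by
  rw [linkingMassValue, reducedMassValue]
  split_ifs
  · rw [oneKronecker_apply]
    refine isUnit_lineMap_of_mul_eq_neg_mul ?_ ?_ ?_ t
    · rw [← mul_kronecker_mul, toggle_mul_toggle, isClifford_pauli.mul_self, one_kronecker_one]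
    · rw [← mul_kronecker_mul, isClifford_pauli.mul_self, one_mul, one_kronecker_one]
    · rw [← mul_kronecker_mul, ← mul_kronecker_mul, one_mul, mul_one,
        isClifford_pauli.mul_eq_neg_mul 2 0 (by decide), kronecker_neg]
  · simp

end Mass

section MassHomotopy

open TrigPoly

variable {κ J : Type*} [Fintype κ] [DecidableEq κ] [Fintype J] [DecidableEq J]
  {A : κ ⊕ κ → Matrix J J ℂ}

namespace IsNonsingularPencil

lemma eventually_posIndex_tensorDirac_kinetic_eq {R : Type*} [Fintype R] [DecidableEq R]
    (hA : IsNonsingularPencil A) {G₀ G₁ : TrigPoly (κ ⊕ κ) (Matrix R R ℂ)}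
    (hG₀ : HasHermitianCoeff G₀) (hG₁ : HasHermitianCoeff G₁)
    (h : ∀ p t, IsUnit (AffineMap.lineMap (eval (corner p) G₀) (eval (corner p) G₁) (t : ℝ))) :
    ∀ᶠ M : ℕ+ in atTop,
      posIndex (tensorDirac M (kinetic A) G₀) = posIndex (tensorDirac M (kinetic A) G₁) := by
  refine eventually_posIndex_tensorDirac_eq hA.hasHermitianCoeff_kinetic
    hA.hasHermitianCoeff_kinetic hG₀ hG₁ (reflect_kinetic A) (reflect_kinetic A) fun t _ z ↦ ?_
  rw [AffineMap.lineMap_same_apply]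
  refine (hA.isUnit_eval_kinetic_or_eq_corner z).imp_right ?_
  rintro ⟨p, rfl⟩
  exact h p t

lemma eventually_posIndex_tensorDirac_zero_eq (hA : IsNonsingularPencil A) :
    ∀ᶠ M : ℕ+ in atTop, posIndex (tensorDirac (J := J) M 0 (initialMass (κ ⊕ κ))) =
      posIndex (tensorDirac M (kinetic A) (initialMass (κ ⊕ κ))) := by
  refine eventually_posIndex_tensorDirac_eq .zero hA.hasHermitianCoeff_kinetic
    hasHermitianCoeff_initialMass hasHermitianCoeff_initialMass (by simp) (reflect_kinetic A)
    fun t _ z ↦ .inr ?_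
  rw [AffineMap.lineMap_same_apply]
  exact isUnit_eval_initialMass z

lemma eventually_pow_dvd_posIndex (hA : IsNonsingularPencil A) :
    ∀ᶠ M : ℕ+ in atTop, 2 ^ Fintype.card (κ ⊕ κ) ∣
      posIndex (tensorDirac (J := J) M 0 (initialMass (κ ⊕ κ))) := by
  have hermitian_linking : HasHermitianCoeff (interpolate (linkingMassValue (ι := κ ⊕ κ))) :=
    hasHermitianCoeff_interpolate isHermitian_linkingMassValue
  have hermitian_reduced : HasHermitianCoeff (interpolate (reducedMassValue (ι := κ ⊕ κ))) :=
    hasHermitianCoeff_interpolate isHermitian_reducedMassValue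
  have initial_eq_linking := hA.eventually_posIndex_tensorDirac_kinetic_eq
    hasHermitianCoeff_initialMass hermitian_linking fun p t ↦ by
      rw [eval_corner_interpolate]
      exact isUnit_lineMap_initialMass_linkingMassValue p t
  have linking_eq_reduced := hA.eventually_posIndex_tensorDirac_kinetic_eq hermitian_linking
    (hermitian_reduced.mapCoeff (oneKronecker (Finset (κ ⊕ κ)) (Fin 2))) fun p t ↦ by
      rw [eval_mapCoeff, eval_corner_interpolate, eval_corner_interpolate]
      exact isUnit_lineMap_linkingMassValue_reducedMassValue p t
  filter_upwards [hA.eventually_posIndex_tensorDirac_zero_eq, initial_eq_linking,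
    linking_eq_reduced] with M h₁ h₂ h₃
  rw [h₁, h₂, h₃, posIndex_tensorDirac_mapCoeff_oneKronecker, Fintype.card_finset]
  exact dvd_mul_right _ _

end IsNonsingularPencil

end MassHomotopy

/-! ### The index without kinetic term -/

section FreeIndex

open TrigPoly
open scoped Kronecker

variable {κ : Type*} [Fintype κ]

lemma phase_self_mul (M : ℕ) [NeZero M] (c : ℤ) : phase M (M * c) = phase 1 c := by
  have : (M : ℂ) ≠ 0 := NeZero.ne _
  simp only [phase, AddChar.coe_mk]
  push_cast
  congr 1
  field_simp

lemma planeWave_nsmul (M : ℕ) [NeZero M] (m : κ ⊕ κ → ℤ) (r : ℕ) (x : κ → ZMod M) :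
    planeWave M m (r • x) = planeWave M m x ^ r := by
  rw [planeWave, planeWave, dotProduct_smul, AddChar.map_nsmul_eq_pow]

variable [DecidableEq κ]

lemma trace_parity_mul_weyl {M : ℕ} [NeZero M] (hM : Odd M) (m : κ ⊕ κ → ℤ) :
    (parity κ M * weyl M m).trace = phase 1 (crossDot m m) := by
  obtain ⟨r, hr⟩ := hM
  set s := shift M m
  have char_nsmul (x : κ → ZMod M) : (2 * r + 1) • x = 0 := by
    rw [← hr, ZModModule.char_nsmul_eq_zero]
  have fixed_iff (x : κ → ZMod M) : x = -x + s ↔ x = -(r • s) := by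
    constructor <;> intro h
    · linear_combination (exp := 1) char_nsmul x - r • h
    · linear_combination (exp := 1) 2 • h - char_nsmul s
  have entry (x : κ → ZMod M) : (parity κ M * weyl M m) x x =
      if x = -x + s then phase M (crossDot m m) * planeWave M m (-x) else 0 := by
    rw [parity, Equiv.Perm.permMatrix, PEquiv.toMatrix_toPEquiv_mul]
    rfl
  simp only [trace, diag_apply, entry, fixed_iff, Finset.sum_ite_eq', Finset.mem_univ, if_true,
    neg_neg, planeWave_nsmul]
  rw [planeWave_shift, ← AddChar.map_nsmul_eq_pow, ← AddChar.map_add_eq_mul, ← phase_self_mul M]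
  congr 1
  rw [hr]
  push_cast
  ring

lemma phase_one_crossDot_indicatorFreq (b : Finset (κ ⊕ κ)) :
    phase 1 (crossDot (indicatorFreq b) (indicatorFreq b)) = (walsh b.toLeft b.toRight : ℂ) := by
  have phase_one_one : phase 1 1 = -1 := by simp [phase]
  have factor (j : κ) : phase 1 (indicatorFreq b (.inl j) * indicatorFreq b (.inr j)) =
      if j ∈ b.toLeft then (cornerSign b.toRight j : ℂ) else 1 := by
    simp only [indicatorFreq, cornerSign, Finset.mem_toLeft, Finset.mem_toRight]
    split_ifs <;> simp [phase_one_one, AddChar.map_zero_eq_one]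
  calc phase 1 (crossDot (indicatorFreq b) (indicatorFreq b))
      = ∏ j, phase 1 (indicatorFreq b (.inl j) * indicatorFreq b (.inr j)) :=
        map_prod (phase 1).toMonoidHom (fun j ↦ Multiplicative.ofAdd _) Finset.univ
    _ = walsh b.toLeft b.toRight := by
        simp only [factor, Finset.prod_ite_mem, Finset.univ_inter, walsh, Complex.ofReal_prod]

lemma sum_phase_one_crossDot_indicatorFreq :
    ∑ b : Finset (κ ⊕ κ), phase 1 (crossDot (indicatorFreq b) (indicatorFreq b)) =
      2 ^ Fintype.card κ := by
  have row_sum (q : Finset κ) : ∑ p, walsh p q = if q = ∅ then (2 : ℝ) ^ Fintype.card κ else 0 := by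
    simpa [walsh_empty_right] using sum_walsh_mul_walsh q ∅
  calc ∑ b : Finset (κ ⊕ κ), phase 1 (crossDot (indicatorFreq b) (indicatorFreq b))
      = ∑ b : Finset κ × Finset κ, (walsh b.1 b.2 : ℂ) :=
        Fintype.sum_equiv Finset.sumEquiv.toEquiv _ _ phase_one_crossDot_indicatorFreq
    _ = 2 ^ Fintype.card κ := by
        rw [Fintype.sum_prod_type_right]
        norm_cast
        simp [row_sum]

variable {J B : Type*} [Fintype J] [DecidableEq J] [Fintype B]

lemma quantize_reflect_mul_self_of_completeOrthogonalIdempotents (M : ℕ) [NeZero M]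
    {C : B → Matrix J J ℂ} (hC : CompleteOrthogonalIdempotents C) (m : B → κ ⊕ κ → ℤ) :
    quantize M (reflect (∑ b, AddMonoidAlgebra.single (m b) (C b))) *
      quantize M (∑ b, AddMonoidAlgebra.single (m b) (C b)) = 1 := by
  classical
  have weyl_neg_mul_weyl (b : B) : weyl M (-m b) * weyl M (m b) = 1 := by
    rw [← conjTranspose_weyl, ← star_eq_conjTranspose]
    exact Unitary.star_mul_self_of_mem (weyl_mem_unitary M (m b))
  have diagonal_term (b b' : B) : (if b = b' then C b else 0) ⊗ₖ (weyl M (-m b) * weyl M (m b')) =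
      if b = b' then kroneckerOne J _ (C b) else 0 := by
    split_ifs with h
    · rw [← h, weyl_neg_mul_weyl, kroneckerOne_apply]
    · exact zero_kronecker _
  simp only [map_sum, reflect_single, quantize_single, Finset.sum_mul_sum, ← mul_kronecker_mul,
    hC.mul_eq, diagonal_term, Finset.sum_ite_eq, Finset.mem_univ, if_true]
  rw [← map_sum, hC.complete, map_one]

lemma trace_tupleParity_mul_quantize_single {M : ℕ} [NeZero M] (hM : Odd M) (m : κ ⊕ κ → ℤ)
    (C : Matrix J J ℂ) : (tupleParity J κ M * quantize M (AddMonoidAlgebra.single m C)).trace =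
      C.trace * phase 1 (crossDot m m) := by
  rw [quantize_single, tupleParity, ← mul_kronecker_mul, one_mul, trace_kronecker,
    trace_parity_mul_weyl hM]

lemma trace_subsetProjection (b : Finset (κ ⊕ κ)) : (subsetProjection b).trace = 2 := by
  simp [subsetProjection, kroneckerOne_apply, trace_kronecker]

lemma tensorDirac_zero_initialMass (M : ℕ) [NeZero M] :
    tensorDirac (J := J) M 0 (initialMass (κ ⊕ κ)) = tupleParity _ κ M * quantize M
      (∑ b, AddMonoidAlgebra.single (indicatorFreq b) (oneKronecker J _ (subsetProjection b))) := by
  simp only [tensorDirac, dirac, initialMass, map_zero, smul_zero, zero_add, map_sum,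
    mapCoeff_single]

variable (κ J)

lemma isHermitian_tensorDirac_zero_initialMass (M : ℕ) [NeZero M] :
    (tensorDirac (J := J) M 0 (initialMass (κ ⊕ κ))).IsHermitian :=
  (isGapped_mapCoeff_kroneckerOne_oneKronecker .zero hasHermitianCoeff_initialMass (by simp)
    fun z ↦ .inr (isUnit_eval_initialMass z)).isHermitian_dirac M

lemma tensorDirac_zero_initialMass_mul_self (M : ℕ) [NeZero M] :
    tensorDirac (J := J) M 0 (initialMass (κ ⊕ κ)) * tensorDirac M 0 (initialMass (κ ⊕ κ)) = 1 := by
  have complete : CompleteOrthogonalIdempotents fun b : Finset (κ ⊕ κ) ↦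
      oneKronecker J _ (subsetProjection b) :=
    completeOrthogonalIdempotents_subsetProjection.map (oneKronecker J _).toAlgHom.toRingHom
  rw [tensorDirac_zero_initialMass, ← mul_assoc, tupleParity_mul_quantize_mul_tupleParity,
    quantize_reflect_mul_self_of_completeOrthogonalIdempotents M complete]

lemma trace_tensorDirac_zero_initialMass {M : ℕ} [NeZero M] (hM : Odd M) :
    (tensorDirac (J := J) M 0 (initialMass (κ ⊕ κ))).trace =
      Fintype.card J * 2 * 2 ^ Fintype.card κ := by
  have trace_coeff (b : Finset (κ ⊕ κ)) :
      (oneKronecker J _ (subsetProjection b)).trace = Fintype.card J * 2 := by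
    rw [oneKronecker_apply, trace_kronecker, trace_one, trace_subsetProjection]
  simp only [tensorDirac_zero_initialMass, map_sum, Finset.mul_sum, trace_sum,
    trace_tupleParity_mul_quantize_single hM, trace_coeff]
  rw [← Finset.mul_sum, sum_phase_one_crossDot_indicatorFreq]

lemma posIndex_tensorDirac_zero_initialMass {M : ℕ} [NeZero M] (hM : Odd M) :
    posIndex (tensorDirac (J := J) M 0 (initialMass (κ ⊕ κ))) =
      Fintype.card J * (2 ^ (2 * Fintype.card κ) * M ^ Fintype.card κ + 2 ^ Fintype.card κ) := by
  have twice := two_mul_posIndex (isHermitian_tensorDirac_zero_initialMass κ J M)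
    (tensorDirac_zero_initialMass_mul_self κ J M)
  rw [trace_tensorDirac_zero_initialMass κ J hM] at twice
  simp only [Fintype.card_prod, Fintype.card_finset, Fintype.card_sum, Fintype.card_fin,
    Fintype.card_fun, ZMod.card] at twice
  norm_cast at twice
  refine Nat.eq_of_mul_eq_mul_left two_pos ?_
  rw [twice]
  ring

end FreeIndex

theorem IsNonsingularPencil.two_pow_dvd_card {κ J : Type*} [Fintype κ] [Fintype J] [DecidableEq J]
    {A : κ ⊕ κ → Matrix J J ℂ} (hA : IsNonsingularPencil A) :
    2 ^ Fintype.card κ ∣ Fintype.card J := by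
  classical
  obtain ⟨M₀, hM₀⟩ := eventually_atTop.mp hA.eventually_pow_dvd_posIndex
  let M : ℕ+ := 2 * M₀ + 1
  have coe_M : (M : ℕ) = 2 * M₀ + 1 := rfl
  have dvd := hM₀ M (PNat.coe_le_coe _ _ |>.mp (by omega))
  rw [posIndex_tensorDirac_zero_initialMass κ J ⟨M₀, coe_M⟩, Fintype.card_sum, ← two_mul, mul_add,
    mul_left_comm, Nat.dvd_add_right (dvd_mul_right _ _), two_mul, pow_add] at dvd
  exact Nat.dvd_of_mul_dvd_mul_right (by positivity) dvd

/-! ### Linear spaces of Hermitian matrices -/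

section LinearMaps

variable {n J : Type*} [Fintype n] [Fintype J] [DecidableEq J]

lemma exists_linearMap_sq_eq_norm_sq_of_isClifford {γ : n → Matrix J J ℂ} (hγ : IsClifford γ) :
    ∃ f : EuclideanSpace ℝ n →ₗ[ℝ] Matrix J J ℂ,
      ∀ v, (f v)ᴴ = f v ∧ f v ^ 2 = ‖v‖ ^ 2 • (1 : Matrix J J ℂ) := by
  let f := Fintype.linearCombination ℝ γ ∘ₗ (EuclideanSpace.equiv n ℝ).toLinearMap
  exact ⟨f, fun v ↦ ⟨hγ.isHermitian_sum_smul v, hγ.sum_smul_sq v⟩⟩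

lemma isUnit_of_sq_eq_norm_sq_smul_one {E : Type*} [NormedAddCommGroup E] {v : E} (hv : v ≠ 0)
    {X : Matrix J J ℂ} (hX : X ^ 2 = ‖v‖ ^ 2 • (1 : Matrix J J ℂ)) : IsUnit X := by
  rw [← isUnit_pow_iff two_ne_zero, hX]
  exact isUnit_one.smul (Units.mk0 _ (pow_ne_zero 2 (norm_ne_zero_iff.mpr hv)))

lemma isNonsingularPencil_of_linearIndependent {ι E : Type*} [Fintype ι] [AddCommGroup E]
    [Module ℝ E] {f : E →ₗ[ℝ] Matrix J J ℂ} (hf : ∀ v, (f v).IsHermitian)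
    (hf' : ∀ v, v ≠ 0 → IsUnit (f v)) {v : ι → E} (hv : LinearIndependent ℝ v) :
    IsNonsingularPencil (f ∘ v) where
  isHermitian l := hf (v l)
  isUnit_sum c hc := by
    have sum_eq : ∑ l, c l • (f ∘ v) l = f (∑ l, c l • v l) := by
      simp only [map_sum, map_smul, Function.comp_apply]
    rw [sum_eq]
    exact hf' _ fun h ↦ hc (funext (Fintype.linearIndependent_iff.mp hv c h))

lemma finrank_le_of_forall_isUnit [Nonempty J] {E : Type*} [AddCommGroup E] [Module ℝ E]
    {f : E →ₗ[ℝ] Matrix J J ℂ} (hf : ∀ v, (f v).IsHermitian) (hf' : ∀ v, v ≠ 0 → IsUnit (f v)) :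
    Module.finrank ℝ E ≤ 2 * padicValNat 2 (Fintype.card J) + 1 := by
  set k := padicValNat 2 (Fintype.card J)
  by_contra! hn
  have le_finrank : k + 1 + (k + 1) ≤ Module.finrank ℝ E := by omega
  obtain ⟨v, hv⟩ := exists_linearIndependent_of_le_finrank le_finrank
  have hA := isNonsingularPencil_of_linearIndependent hf hf'
    (hv.comp finSumFinEquiv finSumFinEquiv.injective)
  have two_pow_dvd : 2 ^ (k + 1) ∣ Fintype.card J := by
    simpa only [Fintype.card_fin] using hA.two_pow_dvd_card
  have := (padicValNat_dvd_iff_le (p := 2) Fintype.card_ne_zero).mp two_pow_dvd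
  omega

end LinearMaps

end

end HurwitzRadon

/-- Entry `𝔤 = 𝔤𝔩(N,ℂ)` of the Hurwitz–Radon value theorem:
`ρ⁽¹⁾ = ρ⁽²⁾ = 2·ord₂(N) + 1`. -/
theorem hurwitzRadon_gl_N_C (N : ℕ) (hN : 1 ≤ N) (n : ℕ) :
    ((∃ f : EuclideanSpace ℝ (Fin n) →ₗ[ℝ] Matrix (Fin N) (Fin N) ℂ,
        ∀ v, (f v)ᴴ = f v ∧
          (f v) ^ 2 = (‖v‖ ^ 2 : ℝ) • (1 : Matrix (Fin N) (Fin N) ℂ)) ↔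
      (∃ f : EuclideanSpace ℝ (Fin n) →ₗ[ℝ] Matrix (Fin N) (Fin N) ℂ,
        (∀ v, (f v)ᴴ = f v) ∧ ∀ v, v ≠ 0 → IsUnit (f v))) ∧
    ((∃ f : EuclideanSpace ℝ (Fin n) →ₗ[ℝ] Matrix (Fin N) (Fin N) ℂ,
        (∀ v, (f v)ᴴ = f v) ∧ ∀ v, v ≠ 0 → IsUnit (f v)) ↔
      n ≤ 2 * padicValNat 2 N + 1) := by
  have square_imp_unit (h : ∃ f : EuclideanSpace ℝ (Fin n) →ₗ[ℝ] Matrix (Fin N) (Fin N) ℂ,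
      ∀ v, (f v)ᴴ = f v ∧ f v ^ 2 = ‖v‖ ^ 2 • (1 : Matrix (Fin N) (Fin N) ℂ)) :
      ∃ f : EuclideanSpace ℝ (Fin n) →ₗ[ℝ] Matrix (Fin N) (Fin N) ℂ,
        (∀ v, (f v)ᴴ = f v) ∧ ∀ v, v ≠ 0 → IsUnit (f v) := by
    obtain ⟨f, hf⟩ := h
    exact ⟨f, fun v ↦ (hf v).1, fun v hv ↦
      HurwitzRadon.isUnit_of_sq_eq_norm_sq_smul_one hv (hf v).2⟩
  have unit_imp_le (h : ∃ f : EuclideanSpace ℝ (Fin n) →ₗ[ℝ] Matrix (Fin N) (Fin N) ℂ,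
      (∀ v, (f v)ᴴ = f v) ∧ ∀ v, v ≠ 0 → IsUnit (f v)) : n ≤ 2 * padicValNat 2 N + 1 := by
    obtain ⟨f, hf, hf'⟩ := h
    have : Nonempty (Fin N) := Fin.pos_iff_nonempty.mp hN
    simpa using HurwitzRadon.finrank_le_of_forall_isUnit hf hf'
  have le_imp_square (hn : n ≤ 2 * padicValNat 2 N + 1) :
      ∃ f : EuclideanSpace ℝ (Fin n) →ₗ[ℝ] Matrix (Fin N) (Fin N) ℂ,
        ∀ v, (f v)ᴴ = f v ∧ f v ^ 2 = ‖v‖ ^ 2 • (1 : Matrix (Fin N) (Fin N) ℂ) := by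
    obtain ⟨γ, hγ⟩ := HurwitzRadon.exists_isClifford_of_two_pow_dvd (pow_padicValNat_dvd (n := N))
    exact HurwitzRadon.exists_linearMap_sq_eq_norm_sq_of_isClifford (hγ.comp (Fin.castLEEmb hn))
  exact ⟨⟨square_imp_unit, le_imp_square ∘ unit_imp_le⟩,
    ⟨unit_imp_le, square_imp_unit ∘ le_imp_square⟩⟩
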